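/- Fix δ > 0, let ℓ_ε = δ√ε, let 𝓛 = {p = (mℓ_ε, nℓ_ε) : m, n ∈ ℤ, |p| ≤ 1 − 2√2 ℓ_ε}, and for η > 5/2 let Λ = B₁ \ ⋃_{p∈𝓛} B(p, ε^η). Identifying ℝ² with ℂ, define g_ε(z) = ∏_{p∈𝓛} (z − p)/|z − p| on Λ. Then there exist a constant C = C(δ, η) independent of ε and ε₀ > 0 such that for all 0 < ε < ε₀, the kinetic energy of the vortex lattice satisfies ∫_Λ |∇g_ε|² dx ≤ π³/(2δ⁴ε²) + C |log ε| / ε. -/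

import Mathlib

open MeasureTheory Real Filter

noncomputable section

/-- Points of the plane. -/
abbrev Pt : Type := EuclideanSpace ℝ (Fin 2)

/-- The open unit disc. -/
def B1 : Set Pt := Metric.ball 0 1

/-- First partial derivative of a complex-valued function. -/
def pd1 (Ψ : Pt → ℂ) (x : Pt) : ℂ := fderiv ℝ Ψ x (EuclideanSpace.single 0 1)

/-- Second partial derivative of a complex-valued function. -/
def pd2 (Ψ : Pt → ℂ) (x : Pt) : ℂ := fderiv ℝ Ψ x (EuclideanSpace.single 1 1)

/-- Angular momentum operator `L = -i (x₁ ∂₂ - x₂ ∂₁)`. -/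
def angMom (Ψ : Pt → ℂ) (x : Pt) : ℂ :=
  -Complex.I * ((x 0 : ℂ) * pd2 Ψ x - (x 1 : ℂ) * pd1 Ψ x)

/-- The Gross-Pitaevskii energy density `|∇Ψ|² - Ω conj(Ψ) LΨ + |Ψ|⁴/ε²`. -/
def gpDensity (ε Ω : ℝ) (Ψ : Pt → ℂ) (x : Pt) : ℝ :=
  ‖pd1 Ψ x‖ ^ 2 + ‖pd2 Ψ x‖ ^ 2
    - Ω * (starRingEnd ℂ (Ψ x) * angMom Ψ x).re
    + ‖Ψ x‖ ^ 4 / ε ^ 2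

/-- The Gross-Pitaevskii functional on the unit disc. -/
def gpEnergy (ε Ω : ℝ) (Ψ : Pt → ℂ) : ℝ := ∫ x in B1, gpDensity ε Ω Ψ x

/-- Admissible (H¹, normalized) wave functions. -/
def gpAdm (Ψ : Pt → ℂ) : Prop :=
  DifferentiableOn ℝ Ψ B1 ∧
  IntegrableOn (fun x => ‖Ψ x‖ ^ 2) B1 ∧
  IntegrableOn (fun x => ‖pd1 Ψ x‖ ^ 2 + ‖pd2 Ψ x‖ ^ 2) B1 ∧
  IntegrableOn (fun x => ‖Ψ x‖ ^ 4) B1 ∧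
  IntegrableOn (fun x => (starRingEnd ℂ (Ψ x) * angMom Ψ x).re) B1 ∧
  (∫ x in B1, ‖Ψ x‖ ^ 2) = 1

/-- The GP ground-state energy: infimum of the functional over normalized functions. -/
def gpGround (ε Ω : ℝ) : ℝ := sInf {E | ∃ Ψ : Pt → ℂ, gpAdm Ψ ∧ E = gpEnergy ε Ω Ψ}

/-- A GP minimizer: a normalized admissible function attaining the infimum. -/
def IsGPMinimizer (ε Ω : ℝ) (Ψ : Pt → ℂ) : Prop :=
  gpAdm Ψ ∧ gpEnergy ε Ω Ψ = gpGround ε Ω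

/-- The Thomas-Fermi functional. -/
def tfEnergy (Ω₀ : ℝ) (ρ : Pt → ℝ) : ℝ :=
  ∫ x in B1, ((ρ x) ^ 2 - Ω₀ ^ 2 * ‖x‖ ^ 2 * ρ x / 4)

/-- Admissible TF densities: nonnegative, in L²(B₁), of total mass one. -/
def tfAdm (ρ : Pt → ℝ) : Prop :=
  IntegrableOn ρ B1 ∧ IntegrableOn (fun x => (ρ x) ^ 2) B1 ∧
  (∀ᵐ x ∂(volume.restrict B1), 0 ≤ ρ x) ∧ (∫ x in B1, ρ x) = 1

/-- The TF ground-state energy. -/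
def tfGround (Ω₀ : ℝ) : ℝ := sInf {E | ∃ ρ : Pt → ℝ, tfAdm ρ ∧ E = tfEnergy Ω₀ ρ}

/-- Radius of the TF "hole". -/
def R0 (Ω₀ : ℝ) : ℝ := Real.sqrt (1 - 4 / (Real.sqrt π * Ω₀))

/-- The TF minimizer. -/
def rhoTF (Ω₀ : ℝ) (x : Pt) : ℝ :=
  if Ω₀ ≤ 4 / Real.sqrt π then 1 / π - Ω₀ ^ 2 / 16 * (1 - 2 * ‖x‖ ^ 2)
  else max 0 (Ω₀ ^ 2 / 8 * (‖x‖ ^ 2 - 1) + Ω₀ / (2 * Real.sqrt π))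

/-- The square lattice of spacing `ℓ` restricted to radius `1 - 2√2 ℓ`. -/
def latt (ℓ : ℝ) : Set Pt :=
  {p | (∃ m : ℤ, p 0 = m * ℓ) ∧ (∃ n : ℤ, p 1 = n * ℓ) ∧ ‖p‖ ≤ 1 - 2 * Real.sqrt 2 * ℓ}

/-- The identification of the plane with `ℂ`. -/
def toC (x : Pt) : ℂ := (x 0 : ℂ) + (x 1 : ℂ) * Complex.I

/-- The phase factor carrying one vortex of degree 1 at each lattice point. -/
def gfun (ℓ : ℝ) (x : Pt) : ℂ := ∏ᶠ p ∈ latt ℓ, (toC x - toC p) / ((‖x - p‖ : ℝ) : ℂ)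

/-- The disc with holes of radius `ρr` around the lattice points removed. -/
def lambdaSet (ℓ ρr : ℝ) : Set Pt := B1 \ ⋃ p ∈ latt ℓ, Metric.ball p ρr

theorem vl_radial (g : ℝ → ℝ) (h : IntegrableOn (fun r => r * g r) (Set.Ioi 0)) :
    Integrable (fun z : ℂ => g ‖z‖) ∧ ∫ z : ℂ, g ‖z‖ = 2 * π * ∫ r in Set.Ioi (0:ℝ), r * g r := by
  constructor
  · rw [integrable_fun_norm_addHaar (volume : Measure ℂ) (f := g)]
    simpa [Complex.finrank_real_complex] using h
  · rw [integral_fun_norm_addHaar (volume : Measure ℂ) g]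
    simp only [Complex.finrank_real_complex, Measure.real, Complex.volume_ball]
    simp
    ring

/-- radial integral over a translated set -/
theorem vl_radial_set (g : ℝ → ℝ) (T : Set ℝ) (hT : MeasurableSet T) (z : ℂ)
    (h : IntegrableOn (fun r => r * g r) (Set.Ioi 0 ∩ T)) :
    IntegrableOn (fun w : ℂ => g ‖z - w‖) {w | ‖z - w‖ ∈ T} ∧
    ∫ w in {w : ℂ | ‖z - w‖ ∈ T}, g ‖z - w‖ = 2 * π * ∫ r in Set.Ioi (0:ℝ) ∩ T, r * g r := by
  have h1 : (fun r => r * T.indicator g r) = T.indicator (fun r => r * g r) := by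
    ext r; by_cases hr : r ∈ T <;> simp [hr]
  have h2 : IntegrableOn (fun r => r * T.indicator g r) (Set.Ioi 0) := by
    rw [h1, IntegrableOn, integrable_indicator_iff hT, IntegrableOn, Measure.restrict_restrict hT, Set.inter_comm]
    exact h
  obtain ⟨a, b⟩ := vl_radial _ h2
  have hm : MeasurableSet {w : ℂ | ‖z - w‖ ∈ T} :=
    (by fun_prop : Measurable fun w : ℂ => ‖z - w‖) hT
  have e : (fun w : ℂ => ({w : ℂ | ‖z - w‖ ∈ T}).indicator (fun w : ℂ => g ‖z - w‖) w)
      = fun w => (fun u : ℂ => T.indicator g ‖u‖) (z - w) := by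
    ext w
    by_cases hw : ‖z - w‖ ∈ T
    · simp [hw]
    · simp [hw]
  constructor
  · rw [← integrable_indicator_iff hm]
    exact (congrArg (fun f => Integrable f volume) e).mpr (a.comp_sub_left z)
  · rw [← integral_indicator hm, e, integral_sub_left_eq_self (fun u : ℂ => T.indicator g ‖u‖) volume z, b, h1, integral_indicator hT,
      Measure.restrict_restrict hT, Set.inter_comm]

theorem vl_R1 (z : ℂ) (R : ℝ) (hR : 0 < R) :
    IntegrableOn (fun w : ℂ => ‖z - w‖⁻¹) {w | ‖z - w‖ < R} ∧
    ∫ w in {w : ℂ | ‖z - w‖ < R}, ‖z - w‖⁻¹ = 2 * π * R := by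
  have e : ∀ r ∈ Set.Ioi (0:ℝ) ∩ Set.Iio R, r * r⁻¹ = 1 := fun r hr => mul_inv_cancel₀ (ne_of_gt hr.1)
  have hm : MeasurableSet (Set.Ioi (0:ℝ) ∩ Set.Iio R) := measurableSet_Ioi.inter measurableSet_Iio
  have := vl_radial_set (fun r => r⁻¹) (Set.Iio R) measurableSet_Iio z (by
    refine IntegrableOn.congr_fun (f := fun _ => (1:ℝ)) ?_ (fun r hr => (e r hr).symm) hm
    rw [Set.Ioi_inter_Iio]
    simp)
  refine ⟨this.1, this.2.trans ?_⟩
  rw [setIntegral_congr_fun hm e, Set.Ioi_inter_Iio]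
  simp [hR.le]

theorem vl_R2 (z : ℂ) (ρ R : ℝ) (hρ : 0 < ρ) (hR : ρ ≤ R) :
    IntegrableOn (fun w : ℂ => (‖z - w‖ ^ 2)⁻¹) {w | ‖z - w‖ ∈ Set.Ioc ρ R} ∧
    ∫ w in {w : ℂ | ‖z - w‖ ∈ Set.Ioc ρ R}, (‖z - w‖ ^ 2)⁻¹ = 2 * π * Real.log (R / ρ) := by
  have hs : Set.Ioi (0:ℝ) ∩ Set.Ioc ρ R = Set.Ioc ρ R := by
    ext r; simp only [Set.mem_inter_iff, Set.mem_Ioi, Set.mem_Ioc]; constructor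
    · tauto
    · intro h; exact ⟨by linarith, h⟩
  have e : ∀ r ∈ Set.Ioc ρ R, r * (r ^ 2)⁻¹ = 1 / r := fun r hr => by
    have : r ≠ 0 := by have := hr.1; linarith
    field_simp
  have h0 : (0:ℝ) ∉ Set.uIcc ρ R := by
    rw [Set.uIcc_of_le hR]; intro h; linarith [h.1]
  have := vl_radial_set (fun r => (r ^ 2)⁻¹) (Set.Ioc ρ R) measurableSet_Ioc z (by
    rw [hs]
    refine IntegrableOn.congr_fun (f := fun r => (1:ℝ) / r) ?_ (fun r hr => (e r hr).symm) measurableSet_Ioc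
    exact (intervalIntegrable_iff_integrableOn_Ioc_of_le hR).1
      (intervalIntegral.intervalIntegrable_one_div (fun x hx hx0 => h0 (hx0 ▸ hx)) continuousOn_id))
  refine ⟨this.1, this.2.trans ?_⟩
  rw [hs, setIntegral_congr_fun measurableSet_Ioc e, ← intervalIntegral.integral_of_le hR, integral_one_div h0]

theorem vl_R3 (z : ℂ) (l : ℝ) (hl : 0 < l) :
    IntegrableOn (fun w : ℂ => (‖z - w‖ ^ 3)⁻¹) {w | l < ‖z - w‖} ∧
    ∫ w in {w : ℂ | l < ‖z - w‖}, (‖z - w‖ ^ 3)⁻¹ = 2 * π / l := by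
  have hs : Set.Ioi (0:ℝ) ∩ Set.Ioi l = Set.Ioi l := by
    ext r; simp only [Set.mem_inter_iff, Set.mem_Ioi]; constructor
    · tauto
    · intro h; exact ⟨by linarith, h⟩
  have e : ∀ r ∈ Set.Ioi l, r * (r ^ 3)⁻¹ = r ^ (-2:ℝ) := fun r hr => by
    have : 0 < r := lt_trans hl hr
    rw [Real.rpow_neg this.le]
    norm_cast
    field_simp
  have := vl_radial_set (fun r => (r ^ 3)⁻¹) (Set.Ioi l) measurableSet_Ioi z (by
    rw [hs]
    refine IntegrableOn.congr_fun (f := fun r => r ^ (-2:ℝ)) ?_ (fun r hr => (e r hr).symm) measurableSet_Ioi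
    exact integrableOn_Ioi_rpow_of_lt (by norm_num) hl)
  refine ⟨this.1, this.2.trans ?_⟩
  rw [hs, setIntegral_congr_fun measurableSet_Ioi e, integral_Ioi_rpow_of_lt (by norm_num) hl]
  norm_num
  rw [Real.rpow_neg hl.le, Real.rpow_one]
  field_simp

theorem vl_R4 (z : ℂ) :
    IntegrableOn (fun w : ℂ => ‖z - w‖ ^ (-(3/2):ℝ)) {w | ‖z - w‖ < 2} ∧
    ∫ w in {w : ℂ | ‖z - w‖ < 2}, ‖z - w‖ ^ (-(3/2):ℝ) ≤ 24 := by
  have e : ∀ r ∈ Set.Ioo (0:ℝ) 2, r * r ^ (-(3/2):ℝ) = r ^ (-(1/2):ℝ) := fun r hr => by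
    rw [← Real.rpow_one_add' hr.1.le (by norm_num)]; norm_num
  have := vl_radial_set (fun r => r ^ (-(3/2):ℝ)) (Set.Iio 2) measurableSet_Iio z (by
    rw [Set.Ioi_inter_Iio]
    refine IntegrableOn.congr_fun (f := fun r => r ^ (-(1/2):ℝ)) ?_ (fun r hr => (e r hr).symm) measurableSet_Ioo
    rw [← integrableOn_Ioc_iff_integrableOn_Ioo]
    exact (intervalIntegrable_iff_integrableOn_Ioc_of_le (by norm_num)).1
      (intervalIntegral.intervalIntegrable_rpow' (by norm_num)))
  refine ⟨this.1, this.2.trans_le ?_⟩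
  rw [Set.Ioi_inter_Iio, setIntegral_congr_fun measurableSet_Ioo e, ← integral_Ioc_eq_integral_Ioo,
    ← intervalIntegral.integral_of_le (by norm_num), integral_rpow (by norm_num)]
  norm_num
  rw [← Real.sqrt_eq_rpow]
  have h1 : √2 < 1.5 := by rw [Real.sqrt_lt' (by norm_num)]; norm_num
  have h2 := Real.pi_lt_four
  have h3 := Real.pi_pos
  have h4 := Real.sqrt_nonneg 2
  nlinarith

theorem vl_R5 : IntegrableOn (fun w : ℂ => ‖w‖ ^ 2) (Metric.ball 0 1) ∧
    ∫ w in Metric.ball (0:ℂ) 1, ‖w‖ ^ 2 = π / 2 := by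
  have e : ∀ r ∈ Set.Ioo (0:ℝ) 1, r * r ^ 2 = r ^ 3 := fun r hr => by ring
  have := vl_radial_set (fun r => r ^ 2) (Set.Iio 1) measurableSet_Iio 0 (by
    rw [Set.Ioi_inter_Iio, ← integrableOn_Ioc_iff_integrableOn_Ioo]
    exact (intervalIntegrable_iff_integrableOn_Ioc_of_le (by norm_num)).1
      ((by fun_prop : Continuous fun r : ℝ => r * r ^ 2).intervalIntegrable _ _))
  have hb : {w : ℂ | ‖0 - w‖ ∈ Set.Iio (1:ℝ)} = Metric.ball 0 1 := by ext; simp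
  simp only [hb] at this
  simp only [zero_sub, norm_neg] at this
  refine ⟨this.1, this.2.trans ?_⟩
  rw [Set.Ioi_inter_Iio, setIntegral_congr_fun measurableSet_Ioo e, ← integral_Ioc_eq_integral_Ioo,
    ← intervalIntegral.integral_of_le (by norm_num), integral_pow]
  norm_num
  ring

theorem vl_circ_in (w : ℂ) (r : ℝ) (hr : 0 < r) (h : r < ‖w‖) :
    Real.circleAverage (fun z => (z - w)⁻¹) 0 r = -w⁻¹ := by
  have hd : DiffContOnCl ℂ (fun z => (z - w)⁻¹) (Metric.ball 0 |r|) := by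
    apply DifferentiableOn.diffContOnCl
    intro z hz
    have hz' : ‖z‖ ≤ r := by
      have := Metric.closure_ball_subset_closedBall hz
      simpa [abs_of_pos hr] using this
    have : z - w ≠ 0 := by
      intro h0
      rw [sub_eq_zero.1 h0] at hz'
      linarith
    exact ((differentiableAt_id.sub_const w).inv this).differentiableWithinAt
  rw [hd.circleAverage]
  simp [inv_neg]

theorem vl_circ_out (w : ℂ) (r : ℝ) (h : ‖w‖ < r) :
    Real.circleAverage (fun z => (z - w)⁻¹) 0 r = 0 := by
  have hr : 0 < r := lt_of_le_of_lt (norm_nonneg _) h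
  have hd : DiffContOnCl ℂ (fun z => z * ((r:ℂ)^2 - (starRingEnd ℂ w) * z)⁻¹) (Metric.ball 0 |r|) := by
    apply DifferentiableOn.diffContOnCl
    intro z hz
    have hz' : ‖z‖ ≤ r := by
      have := Metric.closure_ball_subset_closedBall hz
      simpa [abs_of_pos hr] using this
    have : (r:ℂ)^2 - (starRingEnd ℂ w) * z ≠ 0 := by
      intro h0
      have h1 : ‖(r:ℂ)^2‖ = ‖(starRingEnd ℂ w) * z‖ := by rw [sub_eq_zero.1 h0]
      simp [abs_of_pos hr] at h1
      nlinarith [norm_nonneg w, norm_nonneg z]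
    have : DifferentiableAt ℂ (fun z => z * ((r:ℂ)^2 - (starRingEnd ℂ w) * z)⁻¹) z :=
      differentiableAt_id.mul (DifferentiableAt.inv (by fun_prop) this)
    exact this.differentiableWithinAt
  have h2 := hd.circleAverage
  simp only [zero_mul] at h2
  have h3 : ∀ z ∈ Metric.sphere (0:ℂ) |r|, (z - w)⁻¹ =
      starRingEnd ℂ (z * ((r:ℂ)^2 - (starRingEnd ℂ w) * z)⁻¹) := by
    intro z hz
    have hz' : ‖z‖ = r := by simpa [abs_of_pos hr] using hz
    have hz0 : z ≠ 0 := by rintro rfl; simp at hz'; linarith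
    have hrr : (r:ℂ)^2 = z * starRingEnd ℂ z := by
      rw [Complex.mul_conj, Complex.normSq_eq_norm_sq, hz']; norm_cast
    have hc0 : starRingEnd ℂ z ≠ 0 := by simpa using hz0
    simp only [map_mul, map_inv₀, map_sub, map_pow, Complex.conj_ofReal, Complex.conj_conj]
    rw [hrr, ← sub_mul, mul_inv_rev, ← mul_assoc, mul_inv_cancel₀ hc0, one_mul]
  rw [Real.circleAverage_congr_sphere h3]
  rw [Real.circleAverage_def] at h2 ⊢
  have h4 := congrArg (starRingEnd ℂ) h2
  rw [Complex.real_smul, map_mul, Complex.conj_ofReal, map_zero,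
    intervalIntegral.integral_of_le (by positivity), ← integral_conj] at h4
  rw [Complex.real_smul, intervalIntegral.integral_of_le (by positivity)]
  exact h4

theorem vl_circ_pi (w : ℂ) (r : ℝ) :
    ∫ θ in Set.Ioo (-π) π, ((r : ℂ) * (Real.cos θ + Real.sin θ * Complex.I) - w)⁻¹ =
      (2 * π : ℝ) • Real.circleAverage (fun z => (z - w)⁻¹) 0 r := by
  rw [Real.circleAverage_def, smul_smul, mul_inv_cancel₀ (by positivity), one_smul]
  have hp : Function.Periodic (fun θ : ℝ => (circleMap 0 r θ - w)⁻¹) (2 * π) := by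
    intro θ
    simp only [periodic_circleMap 0 r θ]
  have := hp.intervalIntegral_add_eq (-π) 0
  rw [zero_add] at this
  rw [← this, ← integral_Ioc_eq_integral_Ioo, intervalIntegral.integral_of_le (by linarith [Real.pi_pos])]
  have e : -π + 2 * π = π := by ring
  rw [e]
  congr 1
  ext θ
  simp [circleMap, Complex.exp_mul_I]

theorem vl_cauchy_int (w : ℂ) : IntegrableOn (fun z : ℂ => (z - w)⁻¹) (Metric.ball 0 1) := by
  have h := (vl_R1 w (1 + ‖w‖ + 1) (by positivity)).1
  have h2 : IntegrableOn (fun z : ℂ => (z - w)⁻¹) {z | ‖w - z‖ < 1 + ‖w‖ + 1} := by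
    refine Integrable.mono h (by fun_prop) (Eventually.of_forall fun z => ?_)
    simp [norm_sub_rev]
  refine h2.mono_set fun z hz => ?_
  have : ‖z‖ < 1 := by simpa using hz
  have := norm_sub_le w z
  simp only [Set.mem_ofPred_eq]
  linarith

theorem vl_cauchy (w : ℂ) (hw : ‖w‖ < 1) :
    ∫ z in Metric.ball (0:ℂ) 1, (z - w)⁻¹ = -π * starRingEnd ℂ w := by
  set f : ℂ → ℂ := (Metric.ball (0:ℂ) 1).indicator (fun z => (z - w)⁻¹) with hf
  have hfm : Measurable f := (by fun_prop : Measurable fun z : ℂ => (z - w)⁻¹).indicator measurableSet_ball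
  have hfi : Integrable f := (integrable_indicator_iff measurableSet_ball).2 (vl_cauchy_int w)
  have hint : IntegrableOn (fun p : ℝ × ℝ => p.1 • f (Complex.polarCoord.symm p)) polarCoord.target := by
    have hcm : Measurable fun p : ℝ × ℝ => Complex.polarCoord.symm p := by
      simp only [Complex.polarCoord_symm_apply]; fun_prop
    refine ⟨(measurable_fst.smul (hfm.comp hcm)).aestronglyMeasurable, ?_⟩
    rw [HasFiniteIntegral]
    calc ∫⁻ p in polarCoord.target, ‖p.1 • f (Complex.polarCoord.symm p)‖ₑ
        = ∫⁻ p in polarCoord.target, ENNReal.ofReal p.1 • ‖f (Complex.polarCoord.symm p)‖ₑ := by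
          refine setLIntegral_congr_fun polarCoord.open_target.measurableSet fun p hp => ?_
          simp only [polarCoord_target, Set.mem_prod, Set.mem_Ioi] at hp
          simp only [enorm_smul, smul_eq_mul]
          rw [Real.enorm_eq_ofReal hp.1.le]
      _ = ∫⁻ z, ‖f z‖ₑ := Complex.lintegral_comp_polarCoord_symm (fun z => ‖f z‖ₑ)
      _ < ⊤ := hfi.2
  rw [← integral_indicator measurableSet_ball, ← hf, ← Complex.integral_comp_polarCoord_symm]
  rw [polarCoord_target] at hint ⊢
  rw [Measure.volume_eq_prod, setIntegral_prod _ hint]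
  have hin : ∀ r ∈ Set.Ioi (0:ℝ), r ≠ ‖w‖ → (∫ θ in Set.Ioo (-π) π, (r, θ).1 • f (Complex.polarCoord.symm (r, θ)))
      = (Set.Ioo 0 ‖w‖).indicator (fun r : ℝ => (r : ℂ) * (-(2 * π) * w⁻¹)) r := by
    intro r hr hrw
    have hr : 0 < r := hr
    have hn : ∀ θ : ℝ, ‖(r : ℂ) * (Real.cos θ + Real.sin θ * Complex.I)‖ = r := by
      intro θ
      rw [norm_mul, Complex.ofReal_cos, Complex.ofReal_sin, Complex.norm_cos_add_sin_mul_I]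
      simp [hr.le]
    simp only [Complex.polarCoord_symm_apply]
    rw [integral_smul]
    by_cases h1 : r < 1
    · have : ∀ θ : ℝ, f ((r : ℂ) * (Real.cos θ + Real.sin θ * Complex.I)) =
          ((r : ℂ) * (Real.cos θ + Real.sin θ * Complex.I) - w)⁻¹ := by
        intro θ
        rw [hf, Set.indicator_of_mem]
        simp only [mem_ball_zero_iff, hn, h1]
      simp only [this]
      rw [vl_circ_pi]
      rcases lt_or_gt_of_ne hrw with h | h
      · rw [vl_circ_in w r hr h, Set.indicator_of_mem (by exact ⟨hr, h⟩)]
        simp only [Complex.real_smul]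
        push_cast
        ring
      · rw [vl_circ_out w r h, Set.indicator_of_notMem (fun hh => by linarith [hh.2])]
        simp
    · have : ∀ θ : ℝ, f ((r : ℂ) * (Real.cos θ + Real.sin θ * Complex.I)) = 0 := by
        intro θ
        rw [hf, Set.indicator_of_notMem]
        simp only [mem_ball_zero_iff, hn, h1, not_false_eq_true]
      simp only [this]
      rw [Set.indicator_of_notMem (fun hh => by linarith [hh.2])]
      simp
  have hae : ∀ᵐ r ∂(volume.restrict (Set.Ioi (0:ℝ))), (∫ θ in Set.Ioo (-π) π, (r, θ).1 • f (Complex.polarCoord.symm (r, θ)))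
      = (Set.Ioo 0 ‖w‖).indicator (fun r : ℝ => (r : ℂ) * (-(2 * π) * w⁻¹)) r := by
    rw [ae_restrict_iff' measurableSet_Ioi]
    have : ∀ᵐ r : ℝ, r ≠ ‖w‖ := by
      simp [ae_iff]
    filter_upwards [this] with r h1 h2 using hin r h2 h1
  rw [integral_congr_ae hae, integral_indicator measurableSet_Ioo, Measure.restrict_restrict measurableSet_Ioo]
  have : Set.Ioo 0 ‖w‖ ∩ Set.Ioi 0 = Set.Ioo 0 ‖w‖ := by
    ext r; simp; tauto
  rw [this, ← integral_Ioc_eq_integral_Ioo, ← intervalIntegral.integral_of_le (norm_nonneg _),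
    intervalIntegral.integral_mul_const, intervalIntegral.integral_ofReal, integral_id]
  by_cases h0 : w = 0
  · simp [h0]
  have h5 : (‖w‖ : ℂ) ^ 2 = w * starRingEnd ℂ w := by
    rw [Complex.mul_conj, Complex.normSq_eq_norm_sq]; norm_cast
  push_cast
  rw [h5]
  field_simp
  ring

/-- half-open square cell of side `l` centred at `p` -/
def vlQ (l : ℝ) (p : ℂ) : Set ℂ :=
  {w | (w - p).re ∈ Set.Ico (-(l/2)) (l/2) ∧ (w - p).im ∈ Set.Ico (-(l/2)) (l/2)}

/-- `L` is the finite set of lattice points -/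
def vlLat (l : ℝ) (L : Finset ℂ) : Prop :=
  ∀ p, p ∈ L ↔ (∃ m : ℤ, p.re = m * l) ∧ (∃ n : ℤ, p.im = n * l) ∧ ‖p‖ ≤ 1 - 2 * Real.sqrt 2 * l

theorem vlQ_meas (l : ℝ) (p : ℂ) : MeasurableSet (vlQ l p) := by
  have h1 : Measurable fun w : ℂ => (w - p).re := by fun_prop
  have h2 : Measurable fun w : ℂ => (w - p).im := by fun_prop
  exact (h1 measurableSet_Ico).inter (h2 measurableSet_Ico)

theorem vlQ_norm_sq {l : ℝ} {p w : ℂ} (hw : w ∈ vlQ l p) : ‖w - p‖ ^ 2 ≤ l ^ 2 / 2 := by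
  obtain ⟨⟨a, b⟩, c, d⟩ := hw
  rw [← Complex.normSq_eq_norm_sq, Complex.normSq_apply]
  nlinarith

theorem vlQ_norm {l : ℝ} (hl : 0 < l) {p w : ℂ} (hw : w ∈ vlQ l p) : ‖w - p‖ ≤ 3 / 4 * l := by
  have := vlQ_norm_sq hw
  apply abs_le_of_sq_le_sq' _ (by positivity) |>.2
  nlinarith

theorem vlQ_prod (l : ℝ) (p : ℂ) (f g : ℝ → ℝ) :
    ∫ w in vlQ l p, f (w - p).re * g (w - p).im =
      (∫ x in Set.Ico (-(l/2)) (l/2), f x) * ∫ x in Set.Ico (-(l/2)) (l/2), g x := by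
  have h1 : ∫ w in vlQ l p, f (w - p).re * g (w - p).im =
      ∫ u in vlQ l 0, f u.re * g u.im := by
    rw [← integral_indicator (vlQ_meas l p), ← integral_indicator (vlQ_meas l 0),
      ← integral_sub_right_eq_self (fun u : ℂ => (vlQ l 0).indicator (fun u => f u.re * g u.im) u) p]
    congr 1
    ext w
    by_cases h : w ∈ vlQ l p
    · have h' : w - p ∈ vlQ l 0 := by simpa [vlQ] using h
      rw [Set.indicator_of_mem h, Set.indicator_of_mem h']
    · have h' : w - p ∉ vlQ l 0 := by simpa [vlQ] using h
      rw [Set.indicator_of_notMem h, Set.indicator_of_notMem h']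
  rw [h1, ← setIntegral_prod_mul, ← Measure.volume_eq_prod]
  have := Complex.volume_preserving_equiv_real_prod.setIntegral_preimage_emb
    Complex.measurableEquivRealProd.measurableEmbedding (fun z : ℝ × ℝ => f z.1 * g z.2)
    (Set.Ico (-(l/2)) (l/2) ×ˢ Set.Ico (-(l/2)) (l/2))
  rw [← this]
  have hs : Complex.measurableEquivRealProd ⁻¹' (Set.Ico (-(l/2)) (l/2) ×ˢ Set.Ico (-(l/2)) (l/2)) = vlQ l 0 := by
    ext w; simp [vlQ, Complex.measurableEquivRealProd_apply]
  rw [hs]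
  rfl

theorem vlQ_subset_ball {l : ℝ} (hl : 0 < l) (p : ℂ) : vlQ l p ⊆ Metric.ball p l := by
  intro w hw
  have := vlQ_norm hl hw
  rw [mem_ball_iff_norm]; linarith

theorem vlQ_ne_top {l : ℝ} (hl : 0 < l) (p : ℂ) : volume (vlQ l p) ≠ ⊤ :=
  ne_top_of_le_ne_top measure_ball_lt_top.ne (measure_mono (vlQ_subset_ball hl p))

theorem vlQ_vol {l : ℝ} (hl : 0 < l) (p : ℂ) : volume.real (vlQ l p) = l ^ 2 := by
  have := vlQ_prod l p (fun _ => 1) (fun _ => 1)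
  have h2 : l / 2 + l / 2 = l := by ring
  simp [h2, hl.le] at this
  rw [this]; ring

theorem vlQ_cont_int {l : ℝ} (hl : 0 < l) (p : ℂ) {E : Type*} [NormedAddCommGroup E] {f : ℂ → E}
    (hf : Continuous f) : IntegrableOn f (vlQ l p) :=
  (hf.continuousOn.integrableOn_compact (isCompact_closedBall p l)).mono_set
    ((vlQ_subset_ball hl p).trans Metric.ball_subset_closedBall)

theorem vlQ_mean {l : ℝ} (hl : 0 < l) (p : ℂ) : ∫ w in vlQ l p, (w - p) = 0 := by
  have h0 : ∫ x in Set.Ico (-(l/2)) (l/2), x = 0 := by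
    rw [integral_Ico_eq_integral_Ioc, ← intervalIntegral.integral_of_le (by linarith), integral_id]
    ring
  have hi : IntegrableOn (fun w : ℂ => w - p) (vlQ l p) := vlQ_cont_int hl p (by fun_prop)
  have h1 := vlQ_prod l p (fun x => x) (fun _ => 1)
  have h2 := vlQ_prod l p (fun _ => 1) (fun x => x)
  simp only [mul_one, h0, zero_mul, one_mul, mul_zero] at h1 h2
  apply Complex.ext
  · have := integral_re hi
    simp only [RCLike.re_eq_complex_re] at this
    rw [← this, h1]; rfl
  · have := integral_im hi
    simp only [RCLike.im_eq_complex_im] at this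
    rw [← this, h2]; rfl

theorem vlQ_disj {l : ℝ} (hl : 0 < l) {L : Finset ℂ} (hL : vlLat l L) :
    (L : Set ℂ).Pairwise (Function.onFun Disjoint (vlQ l)) := by
  intro p hp q hq hpq
  rw [Function.onFun, Set.disjoint_left]
  intro w hw hw'
  apply hpq
  obtain ⟨⟨m, hm⟩, ⟨n, hn⟩, -⟩ := (hL p).1 hp
  obtain ⟨⟨m', hm'⟩, ⟨n', hn'⟩, -⟩ := (hL q).1 hq
  obtain ⟨⟨a, b⟩, c, d⟩ := hw
  obtain ⟨⟨a', b'⟩, c', d'⟩ := hw'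
  simp only [Complex.sub_re, Complex.sub_im] at *
  have key : ∀ i j : ℤ, (i : ℝ) * l - j * l < l → (j : ℝ) * l - i * l < l → i = j := by
    intro i j h1 h2
    have h1' : (i : ℝ) - j < 1 := by
      by_contra h
      nlinarith
    have h2' : (j : ℝ) - i < 1 := by
      by_contra h
      nlinarith
    have h3 : i < j + 1 := by exact_mod_cast (by linarith : (i : ℝ) < j + 1)
    have h4 : j < i + 1 := by exact_mod_cast (by linarith : (j : ℝ) < i + 1)
    omega
  apply Complex.ext
  · rw [hm, hm', key m m' (by linarith) (by linarith)]
  · rw [hn, hn', key n n' (by linarith) (by linarith)]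

theorem vl_sqrt2 : 1.4 < √2 ∧ √2 < 1.5 := by
  constructor
  · rw [Real.lt_sqrt (by norm_num)]; norm_num
  · rw [Real.sqrt_lt' (by norm_num)]; norm_num

theorem vlQ_cover {l : ℝ} (hl : 0 < l) {L : Finset ℂ} (hL : vlLat l L) {w : ℂ} (hw : ‖w‖ < 1 - 4 * l) :
    ∃ p ∈ L, w ∈ vlQ l p := by
  have key : ∀ x : ℝ, ∃ m : ℤ, x - m * l ∈ Set.Ico (-(l/2)) (l/2) := by
    intro x
    refine ⟨⌊x / l + 1 / 2⌋, ?_⟩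
    have h1 := Int.floor_le (x / l + 1 / 2)
    have h2 := Int.lt_floor_add_one (x / l + 1 / 2)
    have h3 : x = x / l * l := by field_simp
    constructor
    · nlinarith
    · nlinarith
  obtain ⟨m, hm⟩ := key w.re
  obtain ⟨n, hn⟩ := key w.im
  have hmem : w ∈ vlQ l ⟨m * l, n * l⟩ := ⟨hm, hn⟩
  refine ⟨⟨m * l, n * l⟩, (hL _).2 ⟨⟨m, rfl⟩, ⟨n, rfl⟩, ?_⟩, hmem⟩
  have h1 := vlQ_norm hl hmem
  have h2 := norm_sub_norm_le (⟨m * l, n * l⟩ : ℂ) w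
  rw [norm_sub_rev] at h2
  have := vl_sqrt2.2
  nlinarith

theorem vlQ_ball1 {l : ℝ} (hl : 0 < l) {L : Finset ℂ} (hL : vlLat l L) {p : ℂ} (hp : p ∈ L) :
    vlQ l p ⊆ Metric.ball 0 1 := by
  intro w hw
  have h1 := vlQ_norm hl hw
  have h2 := norm_sub_norm_le w p
  have h3 := ((hL p).1 hp).2.2
  have := vl_sqrt2.1
  rw [mem_ball_zero_iff]
  nlinarith

theorem vlQ_sum {l : ℝ} (hl : 0 < l) {L : Finset ℂ} (hL : vlLat l L) {M : Finset ℂ} (hM : M ⊆ L)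
    {T : Set ℂ} (hT : ∀ p ∈ M, vlQ l p ⊆ T) (hTm : MeasurableSet T) {f : ℂ → ℝ} (hf : IntegrableOn f T)
    (h0 : ∀ w ∈ T, 0 ≤ f w) :
    ∑ p ∈ M, ∫ w in vlQ l p, f w ≤ ∫ w in T, f w := by
  rw [← integral_biUnion_finset M (fun i _ => vlQ_meas l i)
    ((vlQ_disj hl hL).mono (by exact_mod_cast hM)) (fun p hp => hf.mono_set (hT p hp))]
  refine setIntegral_mono_set hf ?_ ?_
  · filter_upwards [ae_restrict_mem hTm] with w hw using h0 w hw
  · exact (Set.iUnion₂_subset hT).eventuallyLE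

theorem vlQ_card {l : ℝ} (hl : 0 < l) {L : Finset ℂ} (hL : vlLat l L) {M : Finset ℂ} (hM : M ⊆ L)
    {z : ℂ} {R : ℝ} (hR : 0 ≤ R) (hT : ∀ p ∈ M, vlQ l p ⊆ Metric.ball z R) :
    (M.card : ℝ) * l ^ 2 ≤ π * R ^ 2 := by
  have := vlQ_sum hl hL hM hT measurableSet_ball (f := fun _ => 1) ((continuous_const.continuousOn.integrableOn_compact (isCompact_closedBall z R)).mono_set
      Metric.ball_subset_closedBall) (by simp)
  simp only [setIntegral_const, smul_eq_mul, mul_one, vlQ_vol hl, Finset.sum_const, nsmul_eq_mul] at this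
  refine this.trans (le_of_eq ?_)
  rw [Measure.real, Complex.volume_ball]
  simp [hR]
  ring

theorem vl_N {l : ℝ} (hl : 0 < l) {L : Finset ℂ} (hL : vlLat l L) : (L.card : ℝ) ≤ π / l ^ 2 := by
  rw [le_div_iff₀ (by positivity)]
  have := vlQ_card hl hL (Finset.Subset.refl L) (z := 0) (R := 1) (by norm_num) (fun p hp => vlQ_ball1 hl hL hp)
  linarith

theorem vl_inv_int (z : ℂ) {T : Set ℂ} (hT : Bornology.IsBounded T) :
    IntegrableOn (fun w : ℂ => (z - w)⁻¹) T ∧ IntegrableOn (fun w : ℂ => ‖z - w‖⁻¹) T := by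
  obtain ⟨r, hr⟩ := hT.subset_ball z
  have hs : T ⊆ {w | ‖z - w‖ < max r 1} := fun w hw => by
    have := hr hw
    rw [mem_ball_iff_norm, norm_sub_rev] at this
    exact lt_of_lt_of_le this (le_max_left _ _)
  have h := (vl_R1 z (max r 1) (by positivity)).1
  refine ⟨?_, h.mono_set hs⟩
  have h2 : IntegrableOn (fun w : ℂ => (z - w)⁻¹) {w | ‖z - w‖ < max r 1} := by
    refine Integrable.mono h (by fun_prop) (Eventually.of_forall fun z => ?_)
    simp
  exact h2.mono_set hs

theorem vlQ_bdd {l : ℝ} (hl : 0 < l) (p : ℂ) : Bornology.IsBounded (vlQ l p) :=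
  Metric.isBounded_ball.subset (vlQ_subset_ball hl p)

theorem vl_far {l : ℝ} (hl : 0 < l) {z p : ℂ} (h : 2 * l ≤ ‖z - p‖) :
    ‖(z - p)⁻¹ - (l ^ 2 : ℝ)⁻¹ • ∫ w in vlQ l p, (z - w)⁻¹‖ ≤ 9 / 8 * ∫ w in vlQ l p, (‖z - w‖ ^ 3)⁻¹ := by
  have hpos : 0 < ‖z - p‖ := by linarith
  have hzp : z - p ≠ 0 := norm_pos_iff.1 hpos
  have hw1 : ∀ w ∈ vlQ l p, l < ‖z - w‖ := by
    intro w hw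
    have h1 := vlQ_norm hl hw
    have h2 := norm_sub_le_norm_sub_add_norm_sub z w p
    linarith
  set t : ℂ → ℂ := fun w => (w - p) ^ 2 * ((z - p) ^ 2)⁻¹ * (z - w)⁻¹ with ht
  have e : ∀ w ∈ vlQ l p, t w = (z - w)⁻¹ - ((z - p)⁻¹ + (w - p) * ((z - p) ^ 2)⁻¹) := by
    intro w hw
    have : z - w ≠ 0 := norm_pos_iff.1 (lt_trans hl (hw1 w hw))
    simp only [ht]
    field_simp
    ring
  have i1 := (vl_inv_int z (vlQ_bdd hl p)).1
  have i2 : IntegrableOn (fun w : ℂ => (z - p)⁻¹) (vlQ l p) := vlQ_cont_int hl p (by fun_prop)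
  have i3 : IntegrableOn (fun w : ℂ => (w - p) * ((z - p) ^ 2)⁻¹) (vlQ l p) := vlQ_cont_int hl p (by fun_prop)
  have i23 : IntegrableOn (fun w : ℂ => (z - p)⁻¹ + (w - p) * ((z - p) ^ 2)⁻¹) (vlQ l p) := i2.add i3
  have e2 : ∫ w in vlQ l p, t w = (∫ w in vlQ l p, (z - w)⁻¹) - (l ^ 2 : ℝ) • (z - p)⁻¹ := by
    rw [setIntegral_congr_fun (vlQ_meas l p) e, integral_sub i1 i23, integral_add i2 i3,
      integral_mul_const, vlQ_mean hl, setIntegral_const, vlQ_vol hl]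
    simp
  have e3 : (z - p)⁻¹ - (l ^ 2 : ℝ)⁻¹ • ∫ w in vlQ l p, (z - w)⁻¹ = -((l ^ 2 : ℝ)⁻¹ • ∫ w in vlQ l p, t w) := by
    rw [e2, smul_sub, smul_smul, inv_mul_cancel₀ (by positivity), one_smul]
    ring
  rw [e3, norm_neg, norm_smul]
  have i4 : IntegrableOn (fun w => (‖z - w‖ ^ 3)⁻¹) (vlQ l p) := (vl_R3 z l hl).1.mono_set hw1
  have hb : ‖∫ w in vlQ l p, t w‖ ≤ ∫ w in vlQ l p, 9 / 8 * l ^ 2 * (‖z - w‖ ^ 3)⁻¹ := by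
    refine norm_integral_le_of_norm_le (i4.const_mul _) ?_
    filter_upwards [ae_restrict_mem (vlQ_meas l p)] with w hw
    have h1 := vlQ_norm_sq hw
    have h2 := vlQ_norm hl hw
    have h3 := norm_sub_le_norm_sub_add_norm_sub z p w
    rw [norm_sub_rev p w] at h3
    have h4 := hw1 w hw
    have h5 : 0 < ‖z - w‖ := by linarith
    simp only [ht, norm_mul, norm_inv, norm_pow]
    have h6 : ‖z - w‖ ≤ 3 / 2 * ‖z - p‖ := by linarith
    have h7 : (‖z - p‖ ^ 2)⁻¹ ≤ 9 / 4 * (‖z - w‖ ^ 2)⁻¹ := by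
      rw [← div_eq_mul_inv, inv_eq_one_div, div_le_div_iff₀ (by positivity) (by positivity)]
      nlinarith
    calc ‖w - p‖ ^ 2 * (‖z - p‖ ^ 2)⁻¹ * ‖z - w‖⁻¹ ≤ l ^ 2 / 2 * (9 / 4 * (‖z - w‖ ^ 2)⁻¹) * ‖z - w‖⁻¹ := by
          gcongr
      _ = 9 / 8 * l ^ 2 * (‖z - w‖ ^ 3)⁻¹ := by
          field_simp; norm_num
  rw [integral_const_mul] at hb
  rw [Real.norm_of_nonneg (by positivity)]
  calc (l ^ 2)⁻¹ * ‖∫ w in vlQ l p, t w‖ ≤ (l ^ 2)⁻¹ * (9 / 8 * l ^ 2 * ∫ w in vlQ l p, (‖z - w‖ ^ 3)⁻¹) := by gcongr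
    _ = _ := by field_simp

/-- the uncovered part of the disc -/
def vlA (l : ℝ) (L : Finset ℂ) : Set ℂ := Metric.ball 0 1 \ ⋃ p ∈ L, vlQ l p

theorem vlA_meas (l : ℝ) (L : Finset ℂ) : MeasurableSet (vlA l L) :=
  measurableSet_ball.diff (L.measurableSet_biUnion fun p _ => vlQ_meas l p)

theorem vl_D {l : ℝ} (hl : 0 < l) {L : Finset ℂ} (hL : vlLat l L) {z : ℂ} (hz : ‖z‖ < 1) :
    ‖(∑ p ∈ L, (z - p)⁻¹) - (π / l ^ 2 : ℝ) * starRingEnd ℂ z‖ ≤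
      (∑ p ∈ L with ‖z - p‖ < 2 * l, ‖z - p‖⁻¹) + 33 / l
       + (l ^ 2)⁻¹ * ‖∫ w in vlA l L, (z - w)⁻¹‖ := by
  have iB := (vl_inv_int z (Metric.isBounded_ball (x := (0:ℂ)) (r := 1))).1
  have hU : (⋃ p ∈ L, vlQ l p) ⊆ Metric.ball 0 1 := Set.iUnion₂_subset fun p hp => vlQ_ball1 hl hL hp
  have hUm : MeasurableSet (⋃ p ∈ L, vlQ l p) := L.measurableSet_biUnion fun p _ => vlQ_meas l p
  have e0 : ∫ w in Metric.ball (0:ℂ) 1, (z - w)⁻¹ = π * starRingEnd ℂ z := by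
    have := vl_cauchy z hz
    have h2 : (fun w : ℂ => (z - w)⁻¹) = fun w => -(w - z)⁻¹ := by
      ext w; rw [← neg_sub, inv_neg]
    rw [h2, integral_neg, this]; ring
  have e1 : ∫ w in vlA l L, (z - w)⁻¹ = π * starRingEnd ℂ z - ∑ p ∈ L, ∫ w in vlQ l p, (z - w)⁻¹ := by
    rw [vlA, setIntegral_sdiff hUm iB hU, e0, integral_biUnion_finset L (fun i _ => vlQ_meas l i) (vlQ_disj hl hL)
      (fun p hp => iB.mono_set (vlQ_ball1 hl hL hp))]
  have e2 : (∑ p ∈ L, (z - p)⁻¹) - (π / l ^ 2 : ℝ) * starRingEnd ℂ z =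
      (∑ p ∈ L, ((z - p)⁻¹ - (l ^ 2 : ℝ)⁻¹ • ∫ w in vlQ l p, (z - w)⁻¹))
        - (l ^ 2 : ℝ)⁻¹ • ∫ w in vlA l L, (z - w)⁻¹ := by
    rw [e1, Finset.sum_sub_distrib, ← Finset.smul_sum, smul_sub]
    simp only [Complex.real_smul]
    push_cast
    ring
  rw [e2]
  refine (norm_sub_le _ _).trans ?_
  rw [norm_smul, Real.norm_of_nonneg (by positivity : 0 ≤ (l ^ 2)⁻¹)]
  gcongr
  refine (norm_sum_le _ _).trans ?_
  rw [← Finset.sum_filter_add_sum_filter_not L (fun p => ‖z - p‖ < 2 * l)]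
  have hnear : ∑ p ∈ L with ‖z - p‖ < 2 * l, ‖(z - p)⁻¹ - (l ^ 2 : ℝ)⁻¹ • ∫ w in vlQ l p, (z - w)⁻¹‖ ≤
      (∑ p ∈ L with ‖z - p‖ < 2 * l, ‖z - p‖⁻¹) + (l ^ 2)⁻¹ * (2 * π * (3 * l)) := by
    calc _ ≤ ∑ p ∈ L with ‖z - p‖ < 2 * l, (‖z - p‖⁻¹ + (l ^ 2)⁻¹ * ∫ w in vlQ l p, ‖z - w‖⁻¹) := by
          refine Finset.sum_le_sum fun p hp => ?_
          refine (norm_sub_le _ _).trans ?_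
          rw [norm_smul, Real.norm_of_nonneg (by positivity : 0 ≤ (l ^ 2)⁻¹), norm_inv]
          gcongr
          refine (norm_integral_le_integral_norm _).trans (le_of_eq ?_)
          simp
      _ ≤ _ := by
          rw [Finset.sum_add_distrib, ← Finset.mul_sum]
          gcongr
          rw [← (vl_R1 z (3 * l) (by positivity)).2]
          refine vlQ_sum hl hL (Finset.filter_subset _ _) ?_ ?_ (vl_R1 z (3 * l) (by positivity)).1 ?_
          · intro p hp w hw
            have h1 := vlQ_norm hl hw
            have h2 := (Finset.mem_filter.1 hp).2
            have h3 := norm_sub_le_norm_sub_add_norm_sub z p w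
            rw [norm_sub_rev p w] at h3
            simp only [Set.mem_ofPred_eq]
            linarith
          · exact measurableSet_lt (by fun_prop) measurable_const
          · intros; positivity
  have hfar : ∑ p ∈ L with ¬ ‖z - p‖ < 2 * l, ‖(z - p)⁻¹ - (l ^ 2 : ℝ)⁻¹ • ∫ w in vlQ l p, (z - w)⁻¹‖ ≤
      9 / 8 * (2 * π / l) := by
    calc _ ≤ ∑ p ∈ L with ¬ ‖z - p‖ < 2 * l, 9 / 8 * ∫ w in vlQ l p, (‖z - w‖ ^ 3)⁻¹ :=
          Finset.sum_le_sum fun p hp => vl_far hl (not_lt.1 (Finset.mem_filter.1 hp).2)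
      _ ≤ _ := by
          rw [← Finset.mul_sum]
          gcongr
          rw [← (vl_R3 z l hl).2]
          refine vlQ_sum hl hL (Finset.filter_subset _ _) ?_ ?_ (vl_R3 z l hl).1 ?_
          · intro p hp w hw
            have h1 := vlQ_norm hl hw
            have h2 := not_lt.1 (Finset.mem_filter.1 hp).2
            have h3 := norm_sub_le_norm_sub_add_norm_sub z w p
            simp only [Set.mem_ofPred_eq]
            linarith
          · exact measurableSet_lt measurable_const (by fun_prop)
          · intros; positivity
  have hc : (l ^ 2)⁻¹ * (2 * π * (3 * l)) + 9 / 8 * (2 * π / l) ≤ 33 / l := by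
    have : (l ^ 2)⁻¹ * (2 * π * (3 * l)) + 9 / 8 * (2 * π / l) = (33 / 4 * π) / l := by
      field_simp; ring
    rw [this]
    gcongr
    linarith [Real.pi_lt_four]
  linarith

theorem vl_kernel_fin (E : Type) [NormedAddCommGroup E] [NormedSpace ℝ E] [MeasurableSpace E] [BorelSpace E]
    [FiniteDimensional ℝ E] [Nontrivial E] (μ : Measure E) [μ.IsAddHaarMeasure] (s : ℝ)
    (hs : -1 < (Module.finrank ℝ E - 1 : ℕ) + s) :
    ∫⁻ u in Metric.ball (0:E) 3, ‖u‖ₑ ^ s ∂μ < ⊤ := by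
  have h1 : IntegrableOn (fun u : E => (fun r : ℝ => r ^ s) ‖u‖) (Metric.ball (0:E) 3) μ := by
    rw [integrableOn_fun_norm_addHaar μ (f := fun r : ℝ => r ^ s)]
    refine IntegrableOn.congr_fun (f := fun r : ℝ => r ^ ((Module.finrank ℝ E - 1 : ℕ) + s)) ?_ ?_ measurableSet_Ioo
    · rw [← integrableOn_Ioc_iff_integrableOn_Ioo]
      exact (intervalIntegrable_iff_integrableOn_Ioc_of_le (by norm_num)).1
        (intervalIntegral.intervalIntegrable_rpow' hs)
    · intro r hr
      simp only [smul_eq_mul]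
      rw [Real.rpow_add hr.1, Real.rpow_natCast]
  refine lt_of_le_of_lt (le_of_eq ?_) h1.2
  refine lintegral_congr_ae ?_
  have : ∀ᵐ u ∂(μ.restrict (Metric.ball (0:E) 3)), u ≠ 0 :=
    ae_restrict_of_ae (by simp [ae_iff])
  filter_upwards [this] with u hu
  have hp : 0 < ‖u‖ := norm_pos_iff.2 hu
  rw [Real.enorm_eq_ofReal (by positivity), ← ofReal_norm, ENNReal.ofReal_rpow_of_pos hp]

theorem vl_JK (E : Type) [NormedAddCommGroup E] [NormedSpace ℝ E] [MeasurableSpace E] [BorelSpace E]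
    [FiniteDimensional ℝ E] [Nontrivial E] (μ : Measure E) [μ.IsAddHaarMeasure] (s : ℝ)
    (hs : -1 < (Module.finrank ℝ E - 1 : ℕ) + s) :
    ∃ J : NNReal, ∀ x : E, ‖x‖ < 1 → ∫⁻ u in Metric.ball (0:E) 1, ‖x - u‖ₑ ^ s ∂μ ≤ J := by
  have h := vl_kernel_fin E μ s hs
  refine ⟨(∫⁻ u in Metric.ball (0:E) 3, ‖u‖ₑ ^ s ∂μ).toNNReal, fun x hx => ?_⟩
  rw [ENNReal.coe_toNNReal h.ne]
  rw [← lintegral_indicator measurableSet_ball, ← lintegral_indicator measurableSet_ball,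
    ← lintegral_sub_left_eq_self (fun u : E => (Metric.ball (0:E) 3).indicator (fun u => ‖u‖ₑ ^ s) u) x]
  refine lintegral_mono fun u => ?_
  by_cases hu : u ∈ Metric.ball (0:E) 1
  · have h2 : x - u ∈ Metric.ball (0:E) 3 := by
      rw [mem_ball_zero_iff] at *
      linarith [norm_sub_le x u]
    rw [Set.indicator_of_mem hu, Set.indicator_of_mem h2]
  · rw [Set.indicator_of_notMem hu]; exact bot_le

/-- planar region: part of the annulus with second coordinate away from zero -/
def vlP (l : ℝ) : Set (ℝ × ℝ) := {q | 1 / 4 ≤ q.2 ^ 2 ∧ (1 - 4 * l) ^ 2 ≤ q.1 ^ 2 + q.2 ^ 2 ∧ q.1 ^ 2 + q.2 ^ 2 < 1}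

theorem vlP_meas (l : ℝ) : MeasurableSet (vlP l) := by
  have a : MeasurableSet {q : ℝ × ℝ | 1 / 4 ≤ q.2 ^ 2} := measurableSet_le (by fun_prop) (by fun_prop)
  have b : MeasurableSet {q : ℝ × ℝ | (1 - 4 * l) ^ 2 ≤ q.1 ^ 2 + q.2 ^ 2} :=
    measurableSet_le (by fun_prop) (by fun_prop)
  have c : MeasurableSet {q : ℝ × ℝ | q.1 ^ 2 + q.2 ^ 2 < 1} := measurableSet_lt (by fun_prop) (by fun_prop)
  exact a.inter (b.inter c)

theorem vlP_slice (l : ℝ) (hl : 0 < l) (x : ℝ) : volume {y | (x, y) ∈ vlP l} ≤ ENNReal.ofReal (16 * l) := by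
  have h1 : ∀ S : Set ℝ, (∀ y ∈ S, (x, y) ∈ vlP l ∧ 1 / 2 ≤ y) ∨ (∀ y ∈ S, (x, y) ∈ vlP l ∧ y ≤ -(1 / 2)) →
      volume S ≤ ENNReal.ofReal (8 * l) := by
    intro S hS
    refine (Real.volume_le_diam S).trans (Metric.ediam_le fun y hy y' hy' => ?_)
    rw [edist_dist]
    apply ENNReal.ofReal_le_ofReal
    rw [Real.dist_eq, abs_le]
    rcases hS with hS | hS
    · obtain ⟨⟨a, b, c⟩, d⟩ := hS y hy
      obtain ⟨⟨a', b', c'⟩, d'⟩ := hS y' hy'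
      dsimp only at *
      constructor <;> nlinarith
    · obtain ⟨⟨a, b, c⟩, d⟩ := hS y hy
      obtain ⟨⟨a', b', c'⟩, d'⟩ := hS y' hy'
      dsimp only at *
      constructor <;> nlinarith
  have hsub : {y | (x, y) ∈ vlP l} ⊆ {y | (x, y) ∈ vlP l ∧ 1 / 2 ≤ y} ∪ {y | (x, y) ∈ vlP l ∧ y ≤ -(1 / 2)} := by
    intro y hy
    rcases le_total 0 y with h | h
    · left; refine ⟨hy, ?_⟩; have := hy.1; dsimp only at this; nlinarith
    · right; refine ⟨hy, ?_⟩; have := hy.1; dsimp only at this; nlinarith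
  refine (measure_mono hsub).trans ((measure_union_le _ _).trans ?_)
  refine (add_le_add (h1 _ (Or.inl fun y hy => hy)) (h1 _ (Or.inr fun y hy => hy))).trans ?_
  rw [← ENNReal.ofReal_add (by positivity) (by positivity)]
  apply ENNReal.ofReal_le_ofReal
  linarith

theorem vlP_int (l : ℝ) (hl : 0 < l) (g : ℝ → ENNReal) (hg : Measurable g) :
    ∫⁻ q in vlP l, g q.1 ≤ (∫⁻ x in Metric.ball (0:ℝ) 1, g x) * ENNReal.ofReal (16 * l) := by
  have hgm : Measurable fun q : ℝ × ℝ => g q.1 := hg.comp measurable_fst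
  rw [← lintegral_indicator (vlP_meas l), Measure.volume_eq_prod,
    lintegral_prod _ ((hgm.indicator (vlP_meas l)).aemeasurable),
    ← lintegral_indicator measurableSet_ball, ← lintegral_mul_const _ (hg.indicator measurableSet_ball)]
  refine lintegral_mono fun x => ?_
  by_cases hx : x ∈ Metric.ball (0:ℝ) 1
  · rw [Set.indicator_of_mem hx]
    have : ∀ y, (vlP l).indicator (fun q : ℝ × ℝ => g q.1) (x, y) = {y | (x, y) ∈ vlP l}.indicator (fun _ => g x) y := by
      intro y
      by_cases h : (x, y) ∈ vlP l
      · rw [Set.indicator_of_mem h, Set.indicator_of_mem (by exact h)]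
      · rw [Set.indicator_of_notMem h, Set.indicator_of_notMem (by exact h)]
    simp only [this]
    have hms : MeasurableSet {y | (x, y) ∈ vlP l} := measurable_prodMk_left (vlP_meas l)
    rw [lintegral_indicator_const hms]
    gcongr
    exact vlP_slice l hl x
  · have : ∀ y, (vlP l).indicator (fun q : ℝ × ℝ => g q.1) (x, y) = 0 := by
      intro y
      rw [Set.indicator_of_notMem]
      intro h
      apply hx
      rw [mem_ball_zero_iff, Real.norm_eq_abs, abs_lt]
      have := h.2.2
      dsimp only at this
      constructor <;> nlinarith [sq_nonneg y]
    simp [this]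

theorem vlA_int {l : ℝ} (hl : 0 < l) (hl' : l ≤ 1 / 16) {L : Finset ℂ} (hL : vlLat l L) (f : ℂ → ENNReal)
    (g h : ℝ → ENNReal) (hg : Measurable g) (hh : Measurable h) (h1 : ∀ w, f w ≤ g w.re) (h2 : ∀ w, f w ≤ h w.im) :
    ∫⁻ w in vlA l L, f w ≤ ((∫⁻ x in Metric.ball (0:ℝ) 1, g x) + ∫⁻ x in Metric.ball (0:ℝ) 1, h x) * ENNReal.ofReal (16 * l) := by
  have mp1 := Complex.volume_preserving_equiv_real_prod
  have mp2 : MeasurePreserving (Prod.swap : ℝ × ℝ → ℝ × ℝ) volume volume := Measure.measurePreserving_swap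
  have hsub : vlA l L ⊆ (Complex.measurableEquivRealProd ⁻¹' vlP l) ∪
      (Complex.measurableEquivRealProd ⁻¹' (Prod.swap ⁻¹' vlP l)) := by
    intro w hw
    have hw1 : ‖w‖ < 1 := by simpa using hw.1
    have hw2 : 1 - 4 * l ≤ ‖w‖ := by
      by_contra hc
      obtain ⟨p, hp, hpw⟩ := vlQ_cover hl hL (not_le.1 hc)
      exact hw.2 (Set.mem_biUnion hp hpw)
    have hn : ‖w‖ ^ 2 = w.re ^ 2 + w.im ^ 2 := by
      rw [← Complex.normSq_eq_norm_sq, Complex.normSq_apply]; ring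
    have a1 : (1 - 4 * l) ^ 2 ≤ w.re ^ 2 + w.im ^ 2 := by
      rw [← hn]; gcongr; linarith
    have a2 : w.re ^ 2 + w.im ^ 2 < 1 := by
      rw [← hn]; nlinarith [norm_nonneg w]
    have a3 : 9 / 16 ≤ (1 - 4 * l) ^ 2 := by nlinarith
    by_cases hc : 1 / 4 ≤ w.im ^ 2
    · left; exact ⟨hc, a1, a2⟩
    · right
      refine ⟨?_, ?_, ?_⟩
      · show 1 / 4 ≤ w.re ^ 2
        linarith
      · show (1 - 4 * l) ^ 2 ≤ w.im ^ 2 + w.re ^ 2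
        linarith
      · show w.im ^ 2 + w.re ^ 2 < 1
        linarith
  have hgm : Measurable fun q : ℝ × ℝ => g q.1 := hg.comp measurable_fst
  have hhm : Measurable fun q : ℝ × ℝ => h q.1 := hh.comp measurable_fst
  have hhm2 : Measurable fun q : ℝ × ℝ => h q.swap.1 := hhm.comp measurable_swap
  refine (lintegral_mono_set hsub).trans ((lintegral_union_le _ _ _).trans ?_)
  rw [add_mul]
  gcongr
  · refine le_trans ?_ (vlP_int l hl g hg)
    rw [← mp1.setLIntegral_comp_preimage (vlP_meas l) hgm]
    exact lintegral_mono fun w => h1 w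
  · refine le_trans ?_ (vlP_int l hl h hh)
    rw [← mp2.setLIntegral_comp_preimage (vlP_meas l) hhm,
      ← mp1.setLIntegral_comp_preimage (measurable_swap (vlP_meas l)) hhm2]
    exact lintegral_mono fun w => h2 w

theorem vlA_vol {l : ℝ} (hl : 0 < l) (hl' : l ≤ 1 / 16) {L : Finset ℂ} (hL : vlLat l L) :
    volume (vlA l L) ≤ ENNReal.ofReal (64 * l) := by
  have := vlA_int hl hl' hL (fun _ => 1) (fun _ => 1) (fun _ => 1) measurable_const measurable_const
    (fun _ => le_rfl) (fun _ => le_rfl)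
  simp only [lintegral_const, one_mul, Measure.restrict_apply_univ, Real.volume_ball] at this
  refine this.trans (le_of_eq ?_)
  rw [← ENNReal.ofReal_add (by norm_num) (by norm_num), ← ENNReal.ofReal_mul (by norm_num)]
  congr 1; ring

theorem vl_a : ∃ C : NNReal, ∀ l : ℝ, 0 < l → l ≤ 1 / 16 → ∀ L : Finset ℂ, vlLat l L →
    ∫⁻ z in Metric.ball (0:ℂ) 1, ‖∫ w in vlA l L, (z - w)⁻¹‖ₑ ^ 2 ≤ C * ENNReal.ofReal (l ^ 2) := by
  obtain ⟨J, hJ⟩ := vl_JK ℝ volume (-(1/2)) (by simp; norm_num)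
  obtain ⟨K, hK⟩ := vl_JK ℂ volume (-(3/2)) (by simp [Complex.finrank_real_complex]; norm_num)
  refine ⟨2 * J * K * 1024, fun l hl hl' L hL => ?_⟩
  have hanti : ∀ s : ℝ, 0 ≤ s → ∀ x y : ENNReal, x ≤ y → y ^ (-s) ≤ x ^ (-s) := by
    intro s hs x y h
    rw [ENNReal.rpow_neg, ENNReal.rpow_neg, ENNReal.inv_le_inv]
    exact ENNReal.rpow_le_rpow h hs
  have hsq : ∀ X : ENNReal, (X ^ (1 / 2 : ℝ)) ^ 2 = X := by
    intro X
    rw [← ENNReal.rpow_natCast, ← ENNReal.rpow_mul]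
    norm_num
  have hmk : ∀ s : ℝ, Measurable fun q : ℂ × ℂ => ‖q.1 - q.2‖ₑ ^ s := fun s => by fun_prop
  have hsup : ∀ z ∈ Metric.ball (0:ℂ) 1, ∫⁻ w in vlA l L, ‖z - w‖ₑ ^ (-(1/2):ℝ) ≤ 2 * J * ENNReal.ofReal (16 * l) := by
    intro z hz
    have hz' : ‖z‖ < 1 := by simpa using hz
    refine (vlA_int hl hl' hL _ (fun x => ‖z.re - x‖ₑ ^ (-(1/2):ℝ)) (fun x => ‖z.im - x‖ₑ ^ (-(1/2):ℝ))
      (by fun_prop) (by fun_prop) ?_ ?_).trans ?_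
    · intro w
      refine hanti (1/2) (by norm_num) _ _ ?_
      rw [← ofReal_norm, ← ofReal_norm]
      apply ENNReal.ofReal_le_ofReal
      rw [← Complex.sub_re]; exact Complex.abs_re_le_norm _
    · intro w
      refine hanti (1/2) (by norm_num) _ _ ?_
      rw [← ofReal_norm, ← ofReal_norm]
      apply ENNReal.ofReal_le_ofReal
      rw [← Complex.sub_im]; exact Complex.abs_im_le_norm _
    · gcongr
      rw [two_mul]
      exact add_le_add (hJ _ (lt_of_le_of_lt (Complex.abs_re_le_norm z) hz'))
        (hJ _ (lt_of_le_of_lt (Complex.abs_im_le_norm z) hz'))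
  have hpt : ∀ z ∈ Metric.ball (0:ℂ) 1, ‖∫ w in vlA l L, (z - w)⁻¹‖ₑ ^ 2 ≤
      (∫⁻ w in vlA l L, ‖z - w‖ₑ ^ (-(3/2):ℝ)) * (2 * J * ENNReal.ofReal (16 * l)) := by
    intro z hz
    have b1 : ‖∫ w in vlA l L, (z - w)⁻¹‖ₑ ≤
        ∫⁻ w in vlA l L, ((fun w => ‖z - w‖ₑ ^ (-(3/4):ℝ)) * (fun w => ‖z - w‖ₑ ^ (-(1/4):ℝ))) w := by
      refine (enorm_integral_le_lintegral_enorm _).trans (lintegral_mono fun w => ?_)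
      simp only [Pi.mul_apply]
      by_cases h0 : z - w = 0
      · simp [h0]
      · have h1 : ‖z - w‖ₑ ≠ 0 := by simpa using h0
        rw [← ENNReal.rpow_add _ _ h1 enorm_ne_top, enorm_inv h0, ← ENNReal.rpow_neg_one]
        apply le_of_eq; congr 1; norm_num
    have b2 := b1.trans (ENNReal.lintegral_mul_le_Lp_mul_Lq (volume.restrict (vlA l L))
      Real.HolderConjugate.two_two (by fun_prop) (by fun_prop))
    have b3 := pow_le_pow_left' b2 2
    refine b3.trans ?_
    rw [mul_pow, hsq, hsq]
    have e1 : ∀ w : ℂ, (‖z - w‖ₑ ^ (-(3 / 4) : ℝ)) ^ (2:ℝ) = ‖z - w‖ₑ ^ (-(3/2):ℝ) := by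
      intro w; rw [← ENNReal.rpow_mul]; norm_num
    have e2 : ∀ w : ℂ, (‖z - w‖ₑ ^ (-(1 / 4) : ℝ)) ^ (2:ℝ) = ‖z - w‖ₑ ^ (-(1/2):ℝ) := by
      intro w; rw [← ENNReal.rpow_mul]; norm_num
    simp only [e1, e2]
    gcongr
    exact hsup z hz
  calc _ ≤ ∫⁻ z in Metric.ball (0:ℂ) 1, (∫⁻ w in vlA l L, ‖z - w‖ₑ ^ (-(3/2):ℝ)) * (2 * J * ENNReal.ofReal (16 * l)) :=
        setLIntegral_mono' measurableSet_ball hpt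
    _ = (∫⁻ z in Metric.ball (0:ℂ) 1, ∫⁻ w in vlA l L, ‖z - w‖ₑ ^ (-(3/2):ℝ)) * (2 * J * ENNReal.ofReal (16 * l)) :=
        lintegral_mul_const _ (hmk _).lintegral_prod_right'
    _ = (∫⁻ w in vlA l L, ∫⁻ z in Metric.ball (0:ℂ) 1, ‖z - w‖ₑ ^ (-(3/2):ℝ)) * (2 * J * ENNReal.ofReal (16 * l)) := by
        rw [lintegral_lintegral_swap]
        exact (hmk _).aemeasurable
    _ ≤ (∫⁻ w in vlA l L, K) * (2 * J * ENNReal.ofReal (16 * l)) := by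
        gcongr ?_ * _
        refine setLIntegral_mono' (vlA_meas l L) fun w hw => ?_
        have : ‖w‖ < 1 := by simpa using hw.1
        refine le_trans (le_of_eq ?_) (hK w this)
        simp only [enorm_sub_rev]
    _ ≤ (K * ENNReal.ofReal (64 * l)) * (2 * J * ENNReal.ofReal (16 * l)) := by
        rw [lintegral_const, Measure.restrict_apply_univ]
        gcongr
        exact vlA_vol hl hl' hL
    _ = _ := by
        have e1 : ENNReal.ofReal (64 * l) = 64 * ENNReal.ofReal l := by
          rw [ENNReal.ofReal_mul (by norm_num)]; norm_num
        have e2 : ENNReal.ofReal (16 * l) = 16 * ENNReal.ofReal l := by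
          rw [ENNReal.ofReal_mul (by norm_num)]; norm_num
        rw [e1, e2, ENNReal.ofReal_pow hl.le]
        push_cast
        ring

/-- the phase gradient field -/
def vlS (L : Finset ℂ) (z : ℂ) : ℂ := ∑ p ∈ L, (z - p)⁻¹

/-- the union of holes, inside the disc -/
def vlH (ρ : ℝ) (L : Finset ℂ) : Set ℂ := Metric.ball 0 1 ∩ ⋃ p ∈ L, Metric.ball p ρ

theorem vlH_meas (ρ : ℝ) (L : Finset ℂ) : MeasurableSet (vlH ρ L) :=
  measurableSet_ball.inter (L.measurableSet_biUnion fun p _ => measurableSet_ball)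

theorem vlS_meas (L : Finset ℂ) : Measurable (vlS L) := by
  unfold vlS; fun_prop

theorem vlH_vol {l ρ : ℝ} (hl : 0 < l) (hρ : 0 < ρ) {L : Finset ℂ} (hL : vlLat l L) :
    volume.real (vlH ρ L) ≤ π / l ^ 2 * (π * ρ ^ 2) := by
  have h1 : volume.real (vlH ρ L) ≤ ∑ p ∈ L, volume.real (Metric.ball p ρ) := by
    refine (measureReal_mono Set.inter_subset_right ?_).trans (measureReal_biUnion_finset_le _ _)
    exact (measure_biUnion_lt_top L.finite_toSet fun p _ => measure_ball_lt_top).ne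
  refine h1.trans ?_
  have : ∀ p : ℂ, volume.real (Metric.ball p ρ) = π * ρ ^ 2 := by
    intro p
    rw [Measure.real, Complex.volume_ball]
    simp [hρ.le]
    ring
  simp only [this, Finset.sum_const, nsmul_eq_mul]
  gcongr
  exact vl_N hl hL

theorem vl_G {l ρ : ℝ} (hl : 0 < l) (hρ : 0 < ρ) (hρl : ρ ≤ l) {L : Finset ℂ} (hL : vlLat l L) :
    ∃ G : ℂ → ℝ, Measurable G ∧ Integrable G ∧ (∀ z, 0 ≤ G z) ∧
      ∫ z, G z ≤ π / l ^ 2 * (2 * π * Real.log (4 * l / ρ)) ∧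
      ∀ z ∈ Metric.ball (0:ℂ) 1 \ vlH ρ L, (∑ p ∈ L with ‖z - p‖ < 2 * l, ‖z - p‖⁻¹) ^ 2 ≤ 36 * G z := by
  have hr : ∀ p : ℂ, _ := fun p => vl_R2 p (ρ / 2) (2 * l) (by positivity) (by linarith)
  have hm : ∀ p : ℂ, MeasurableSet {w : ℂ | ‖p - w‖ ∈ Set.Ioc (ρ / 2) (2 * l)} := fun p =>
    (by fun_prop : Measurable fun w : ℂ => ‖p - w‖) measurableSet_Ioc
  have hnn : ∀ p z : ℂ, 0 ≤ {w : ℂ | ‖p - w‖ ∈ Set.Ioc (ρ / 2) (2 * l)}.indicator (fun w => (‖p - w‖ ^ 2)⁻¹) z :=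
    fun p z => Set.indicator_nonneg (fun w _ => by positivity) z
  refine ⟨fun z => ∑ p ∈ L, {w : ℂ | ‖p - w‖ ∈ Set.Ioc (ρ / 2) (2 * l)}.indicator (fun w => (‖p - w‖ ^ 2)⁻¹) z,
    ?_, ?_, ?_, ?_, ?_⟩
  · exact Finset.measurable_sum _ fun p _ => Measurable.indicator (by fun_prop) (hm p)
  · exact integrable_finset_sum _ fun p _ => (integrable_indicator_iff (hm p)).2 (hr p).1
  · intro z; exact Finset.sum_nonneg fun p _ => hnn p z
  · rw [integral_finset_sum _ fun p _ => (integrable_indicator_iff (hm p)).2 (hr p).1]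
    have : ∀ p ∈ L, ∫ z, {w : ℂ | ‖p - w‖ ∈ Set.Ioc (ρ / 2) (2 * l)}.indicator (fun w => (‖p - w‖ ^ 2)⁻¹) z
        = 2 * π * Real.log (4 * l / ρ) := by
      intro p _
      rw [integral_indicator (hm p), (hr p).2]
      congr 2
      field_simp
      ring
    rw [Finset.sum_congr rfl this, Finset.sum_const, nsmul_eq_mul]
    have hlog : 0 ≤ Real.log (4 * l / ρ) := Real.log_nonneg (by rw [le_div_iff₀ hρ]; linarith)
    gcongr
    exact vl_N hl hL
  · intro z hz
    have hcard : ((L.filter fun p => ‖z - p‖ < 2 * l).card : ℝ) ≤ 36 := by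
      have := vlQ_card hl hL (Finset.filter_subset (fun p => ‖z - p‖ < 2 * l) L) (z := z) (R := 3 * l) (by positivity) (by
        intro p hp w hw
        have h1 := vlQ_norm hl hw
        have h2 := (Finset.mem_filter.1 hp).2
        have h3 := norm_sub_le_norm_sub_add_norm_sub z p w
        rw [norm_sub_rev p w] at h3
        rw [mem_ball_iff_norm, norm_sub_rev]
        linarith)
      have h2 : ((L.filter fun p => ‖z - p‖ < 2 * l).card : ℝ) ≤ 9 * π := by
        refine le_of_mul_le_mul_right (this.trans (le_of_eq ?_)) (by positivity : 0 < l ^ 2)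
        ring
      linarith [Real.pi_lt_four]
    refine sq_sum_le_card_mul_sum_sq.trans ?_
    refine mul_le_mul hcard ?_ (Finset.sum_nonneg fun p _ => by positivity) (by norm_num)
    rw [Finset.sum_filter]
    refine Finset.sum_le_sum fun p hp => ?_
    split_ifs with h
    · rw [Set.indicator_of_mem]
      · rw [norm_sub_rev, inv_pow]
      · have h1 : ¬ ‖z - p‖ < ρ := by
          intro hc
          exact hz.2 ⟨hz.1, Set.mem_biUnion hp (by rw [mem_ball_iff_norm]; exact hc)⟩
        simp only [Set.mem_ofPred_eq, Set.mem_Ioc]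
        rw [norm_sub_rev]
        constructor <;> linarith
    · exact hnn p z

theorem vl_D2 : ∃ C : ℝ, 0 ≤ C ∧ ∀ l ρ : ℝ, 0 < l → l ≤ 1 / 16 → 0 < ρ → ρ ≤ l → ∀ L : Finset ℂ, vlLat l L →
    ∫⁻ z in Metric.ball (0:ℂ) 1 \ vlH ρ L, ‖vlS L z - (π / l ^ 2 : ℝ) * starRingEnd ℂ z‖ₑ ^ 2 ≤
      ENNReal.ofReal (C / l ^ 2 * (1 + Real.log (4 * l / ρ))) := by
  obtain ⟨C, hC⟩ := vl_a
  refine ⟨108 * (2 * π ^ 2) + 3 * 33 ^ 2 * π + 3 * C, by positivity, ?_⟩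
  intro l ρ hl hl' hρ hρl L hL
  obtain ⟨G, hGm, hGi, hG0, hGint, hG⟩ := vl_G hl hρ hρl hL
  have hlog : 0 ≤ Real.log (4 * l / ρ) := Real.log_nonneg (by rw [le_div_iff₀ hρ]; linarith)
  have hms : MeasurableSet (Metric.ball (0:ℂ) 1 \ vlH ρ L) := measurableSet_ball.diff (vlH_meas ρ L)
  have hpt : ∀ z ∈ Metric.ball (0:ℂ) 1 \ vlH ρ L, ‖vlS L z - (π / l ^ 2 : ℝ) * starRingEnd ℂ z‖ₑ ^ 2 ≤
      ENNReal.ofReal (108 * G z + 3 * (33 / l) ^ 2) +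
        ENNReal.ofReal (3 * ((l ^ 2)⁻¹) ^ 2) * ‖∫ w in vlA l L, (z - w)⁻¹‖ₑ ^ 2 := by
    intro z hz
    have hz1 : ‖z‖ < 1 := by simpa using hz.1
    have h1 := vl_D hl hL hz1
    have h2 := hG z hz
    have h3 := hG0 z
    rw [← ofReal_norm, ← ofReal_norm, ← ENNReal.ofReal_pow (norm_nonneg _), ← ENNReal.ofReal_pow (norm_nonneg _),
      ← ENNReal.ofReal_mul (by positivity), ← ENNReal.ofReal_add (by positivity) (by positivity)]
    apply ENNReal.ofReal_le_ofReal
    have h4 := pow_le_pow_left₀ (norm_nonneg _) h1 2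
    refine h4.trans ?_
    set a := ∑ p ∈ L with ‖z - p‖ < 2 * l, ‖z - p‖⁻¹
    set b := 33 / l
    set c := ‖∫ w in vlA l L, (z - w)⁻¹‖
    have : 3 * (l ^ 2)⁻¹ ^ 2 * c ^ 2 = 3 * ((l ^ 2)⁻¹ * c) ^ 2 := by ring
    rw [this]
    nlinarith [sq_nonneg (a - b), sq_nonneg (a - (l ^ 2)⁻¹ * c), sq_nonneg (b - (l ^ 2)⁻¹ * c)]
  have hmeas : Measurable fun z => ENNReal.ofReal (108 * G z + 3 * (33 / l) ^ 2) := by fun_prop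
  have hfi : IntegrableOn (fun z => 108 * G z + 3 * (33 / l) ^ 2) (Metric.ball (0:ℂ) 1) :=
    (hGi.integrableOn.const_mul _).add ((continuous_const.continuousOn.integrableOn_compact
      (isCompact_closedBall (0:ℂ) 1)).mono_set Metric.ball_subset_closedBall)
  have hf : ∫⁻ z in Metric.ball (0:ℂ) 1, ENNReal.ofReal (108 * G z + 3 * (33 / l) ^ 2) ≤
      ENNReal.ofReal (108 * (π / l ^ 2 * (2 * π * Real.log (4 * l / ρ))) + 3 * (33 / l) ^ 2 * π) := by
    rw [← ofReal_integral_eq_lintegral_ofReal hfi (Eventually.of_forall fun z => by have := hG0 z; positivity)]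
    apply ENNReal.ofReal_le_ofReal
    rw [integral_add (hGi.integrableOn.const_mul _) ((continuous_const.continuousOn.integrableOn_compact
      (isCompact_closedBall (0:ℂ) 1)).mono_set Metric.ball_subset_closedBall), integral_const_mul]
    have h1 : ∫ z in Metric.ball (0:ℂ) 1, G z ≤ ∫ z, G z :=
      setIntegral_le_integral hGi (Eventually.of_forall hG0)
    have h2 : volume.real (Metric.ball (0:ℂ) 1) = π := by
      rw [Measure.real, Complex.volume_ball]; simp
    rw [setIntegral_const, h2, smul_eq_mul, mul_comm π]
    gcongr
    exact h1.trans hGint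
  calc _ ≤ ∫⁻ z in Metric.ball (0:ℂ) 1 \ vlH ρ L, (ENNReal.ofReal (108 * G z + 3 * (33 / l) ^ 2) +
        ENNReal.ofReal (3 * ((l ^ 2)⁻¹) ^ 2) * ‖∫ w in vlA l L, (z - w)⁻¹‖ₑ ^ 2) := setLIntegral_mono' hms hpt
    _ ≤ ∫⁻ z in Metric.ball (0:ℂ) 1, (ENNReal.ofReal (108 * G z + 3 * (33 / l) ^ 2) +
        ENNReal.ofReal (3 * ((l ^ 2)⁻¹) ^ 2) * ‖∫ w in vlA l L, (z - w)⁻¹‖ₑ ^ 2) :=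
        lintegral_mono_set Set.diff_subset
    _ = (∫⁻ z in Metric.ball (0:ℂ) 1, ENNReal.ofReal (108 * G z + 3 * (33 / l) ^ 2)) +
        ENNReal.ofReal (3 * ((l ^ 2)⁻¹) ^ 2) * ∫⁻ z in Metric.ball (0:ℂ) 1, ‖∫ w in vlA l L, (z - w)⁻¹‖ₑ ^ 2 := by
        rw [lintegral_add_left hmeas, lintegral_const_mul' _ _ ENNReal.ofReal_ne_top]
    _ ≤ ENNReal.ofReal (108 * (π / l ^ 2 * (2 * π * Real.log (4 * l / ρ))) + 3 * (33 / l) ^ 2 * π) +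
        ENNReal.ofReal (3 * ((l ^ 2)⁻¹) ^ 2) * (C * ENNReal.ofReal (l ^ 2)) := by
        gcongr
        exact hC l hl hl' L hL
    _ ≤ _ := by
        rw [← ENNReal.ofReal_coe_nnreal (p := C), ← ENNReal.ofReal_mul (by positivity), ← ENNReal.ofReal_mul (by positivity),
          ← ENNReal.ofReal_add (by positivity) (by positivity)]
        apply ENNReal.ofReal_le_ofReal
        set t := Real.log (4 * l / ρ)
        have : (108 * (2 * π ^ 2) + 3 * 33 ^ 2 * π + 3 * (C:ℝ)) / l ^ 2 * (1 + t) -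
          (108 * (π / l ^ 2 * (2 * π * t)) + 3 * (33 / l) ^ 2 * π + 3 * (l ^ 2)⁻¹ ^ 2 * (C * l ^ 2)) =
            (108 * (2 * π ^ 2) + (3 * 33 ^ 2 * π + 3 * (C:ℝ)) * t) / l ^ 2 := by
          field_simp; ring
        have h2 : 0 ≤ (108 * (2 * π ^ 2) + (3 * 33 ^ 2 * π + 3 * (C:ℝ)) * t) / l ^ 2 := by positivity
        linarith

theorem vl_cross (p : ℂ) (hp : ‖p‖ < 1) :
    IntegrableOn (fun z : ℂ => (z * (z - p)⁻¹).re) (Metric.ball 0 1) ∧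
    ∫ z in Metric.ball (0:ℂ) 1, (z * (z - p)⁻¹).re = π * (1 - ‖p‖ ^ 2) := by
  have hae : (fun z : ℂ => 1 + p * (z - p)⁻¹) =ᵐ[volume.restrict (Metric.ball (0:ℂ) 1)]
      (fun z : ℂ => z * (z - p)⁻¹) := by
    have : ∀ᵐ z ∂(volume : Measure ℂ), z ≠ p := by
      simp [ae_iff]
    filter_upwards [ae_restrict_of_ae this] with z hz
    have : z - p ≠ 0 := sub_ne_zero.2 hz
    field_simp
    ring
  have i1 : IntegrableOn (fun _ : ℂ => (1:ℂ)) (Metric.ball (0:ℂ) 1) :=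
    integrableOn_const measure_ball_lt_top.ne
  have i2 : IntegrableOn (fun z : ℂ => p * (z - p)⁻¹) (Metric.ball (0:ℂ) 1) :=
    (vl_cauchy_int p).const_mul p
  have i3 : IntegrableOn (fun z : ℂ => z * (z - p)⁻¹) (Metric.ball (0:ℂ) 1) :=
    (i1.add i2).congr hae
  refine ⟨i3.re, ?_⟩
  have e1 : ∫ z in Metric.ball (0:ℂ) 1, z * (z - p)⁻¹ = (π * (1 - ‖p‖ ^ 2) : ℝ) := by
    rw [← integral_congr_ae hae, integral_add i1 i2, integral_const_mul, vl_cauchy p hp]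
    have h2 : volume.real (Metric.ball (0:ℂ) 1) = π := by
      rw [Measure.real, Complex.volume_ball]; simp
    rw [setIntegral_const, h2]
    have h3 : p * (starRingEnd ℂ p) = (‖p‖ ^ 2 : ℝ) := by
      rw [Complex.mul_conj, Complex.normSq_eq_norm_sq]
    simp only [Complex.real_smul, mul_one]
    push_cast at h3 ⊢
    linear_combination (-π : ℂ) * h3
  have e2 := integral_re i3
  simp only [RCLike.re_eq_complex_re] at e2
  rw [e2, e1, Complex.ofReal_re]

theorem vl_cell {l : ℝ} (hl : 0 < l) (p : ℂ) :
    l ^ 2 * (1 - ‖p‖ ^ 2) ≤ (∫ w in vlQ l p, (1 - ‖w‖ ^ 2)) + l ^ 2 * (l ^ 2 / 2) := by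
  have hid : ∀ w : ℂ, 1 - ‖w‖ ^ 2 = (1 - ‖p‖ ^ 2) - (2 * (starRingEnd ℂ p * (w - p)).re + ‖w - p‖ ^ 2) := by
    intro w
    simp only [← Complex.normSq_eq_norm_sq, Complex.normSq_apply, Complex.mul_re, Complex.conj_re, Complex.conj_im,
      Complex.sub_re, Complex.sub_im]
    ring
  have j0 : IntegrableOn (fun w : ℂ => starRingEnd ℂ p * (w - p)) (vlQ l p) :=
    vlQ_cont_int hl p (by fun_prop)
  have j1 : IntegrableOn (fun w : ℂ => 2 * (starRingEnd ℂ p * (w - p)).re) (vlQ l p) :=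
    (j0.re).const_mul 2
  have j2 : IntegrableOn (fun w : ℂ => ‖w - p‖ ^ 2) (vlQ l p) := vlQ_cont_int hl p (by fun_prop)
  have j3 : IntegrableOn (fun w : ℂ => 2 * (starRingEnd ℂ p * (w - p)).re + ‖w - p‖ ^ 2) (vlQ l p) := j1.add j2
  have j4 : IntegrableOn (fun w : ℂ => (1 - ‖p‖ ^ 2 : ℝ)) (vlQ l p) := vlQ_cont_int hl p (by fun_prop)
  have k0 : ∫ w in vlQ l p, (starRingEnd ℂ p * (w - p)).re = 0 := by
    have e2 := integral_re j0
    simp only [RCLike.re_eq_complex_re] at e2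
    rw [e2, integral_const_mul, vlQ_mean hl]; simp
  have k2 : ∫ w in vlQ l p, ‖w - p‖ ^ 2 ≤ l ^ 2 * (l ^ 2 / 2) := by
    have := setIntegral_mono_on j2 (vlQ_cont_int hl p (continuous_const (y := l ^ 2 / 2))) (vlQ_meas l p)
      (fun w hw => vlQ_norm_sq hw)
    rwa [setIntegral_const, vlQ_vol hl, smul_eq_mul] at this
  rw [integral_congr_ae (Eventually.of_forall hid)]
  rw [integral_sub j4 j3, integral_add j1 j2, integral_const_mul, k0, setIntegral_const, vlQ_vol hl, smul_eq_mul]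
  linarith

theorem vl_sum {l : ℝ} (hl : 0 < l) {L : Finset ℂ} (hL : vlLat l L) :
    ∑ p ∈ L, (1 - ‖p‖ ^ 2) ≤ (π / 2 + π * l ^ 2 / 2) / l ^ 2 := by
  rw [le_div_iff₀ (by positivity)]
  have h2 : volume.real (Metric.ball (0:ℂ) 1) = π := by
    rw [Measure.real, Complex.volume_ball]; simp
  have i1 : IntegrableOn (fun _ : ℂ => (1:ℝ)) (Metric.ball (0:ℂ) 1) :=
    integrableOn_const measure_ball_lt_top.ne
  have i2 : IntegrableOn (fun w : ℂ => 1 - ‖w‖ ^ 2) (Metric.ball (0:ℂ) 1) := i1.sub vl_R5.1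
  have h3 : ∫ w in Metric.ball (0:ℂ) 1, (1 - ‖w‖ ^ 2) = π / 2 := by
    rw [integral_sub i1 vl_R5.1, vl_R5.2, setIntegral_const, h2, smul_eq_mul]; ring
  have h4 := vlQ_sum hl hL (subset_refl L) (fun p hp => vlQ_ball1 hl hL hp) measurableSet_ball i2 (by
    intro w hw
    rw [mem_ball_zero_iff] at hw
    nlinarith [norm_nonneg w])
  have h5 := Finset.sum_le_sum (fun p (_ : p ∈ L) => vl_cell hl p)
  rw [← Finset.mul_sum, Finset.sum_add_distrib, Finset.sum_const, nsmul_eq_mul] at h5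
  have h6 := vl_N hl hL
  rw [le_div_iff₀ (by positivity)] at h6
  have h7 : (L.card : ℝ) * (l ^ 2 * (l ^ 2 / 2)) ≤ π * l ^ 2 / 2 := by nlinarith [sq_nonneg l]
  linarith

theorem vl_hole {l ρ : ℝ} (hl : 0 < l) (hρ : 0 < ρ) (hρl : ρ ≤ l ^ 3) {L : Finset ℂ} (hL : vlLat l L) (p : ℂ) :
    ∫ z in vlH ρ L, ‖z - p‖⁻¹ ≤ (2 * π + π ^ 2) * l ^ 2 ∧ volume.real (vlH ρ L) ≤ π ^ 2 * l ^ 4 := by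
  have hv : volume.real (vlH ρ L) ≤ π ^ 2 * l ^ 4 := by
    refine (vlH_vol hl hρ hL).trans ?_
    have : ρ ^ 2 ≤ (l ^ 3) ^ 2 := by gcongr
    calc π / l ^ 2 * (π * ρ ^ 2) ≤ π / l ^ 2 * (π * (l ^ 3) ^ 2) := by gcongr
      _ = _ := by field_simp
  refine ⟨?_, hv⟩
  have hne : volume (vlH ρ L) ≠ ⊤ := ne_top_of_le_ne_top (measure_ball_lt_top (x := (0:ℂ)) (r := 1)).ne
    (measure_mono Set.inter_subset_left)
  have hm : MeasurableSet {w : ℂ | ‖p - w‖ < l ^ 2} := measurableSet_lt (by fun_prop) (by fun_prop)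
  obtain ⟨a1, a2⟩ := vl_R1 p (l ^ 2) (by positivity)
  have b1 : Integrable ({w : ℂ | ‖p - w‖ < l ^ 2}.indicator fun w => ‖p - w‖⁻¹) := (integrable_indicator_iff hm).2 a1
  have b2 : ∫ w, {w : ℂ | ‖p - w‖ < l ^ 2}.indicator (fun w => ‖p - w‖⁻¹) w = 2 * π * l ^ 2 := by
    rw [integral_indicator hm, a2]
  have b0 : ∀ w, 0 ≤ {w : ℂ | ‖p - w‖ < l ^ 2}.indicator (fun w => ‖p - w‖⁻¹) w := fun w =>
    Set.indicator_nonneg (fun _ _ => by positivity) w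
  have c1 : IntegrableOn (fun _ : ℂ => (l ^ 2)⁻¹) (vlH ρ L) := integrableOn_const hne
  have hi : IntegrableOn (fun z : ℂ => ‖z - p‖⁻¹) (vlH ρ L) := by
    have := (vl_inv_int p (T := vlH ρ L) (Metric.isBounded_ball.subset Set.inter_subset_left)).2
    simpa only [norm_sub_rev] using this
  have d1 : IntegrableOn (fun w => {w : ℂ | ‖p - w‖ < l ^ 2}.indicator (fun w => ‖p - w‖⁻¹) w + (l ^ 2)⁻¹) (vlH ρ L) :=
    b1.integrableOn.add c1
  have := setIntegral_mono_on hi d1 (vlH_meas ρ L) (fun w _ => by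
    by_cases h : ‖p - w‖ < l ^ 2
    · rw [Set.indicator_of_mem (by exact h), norm_sub_rev]
      have : 0 ≤ (l ^ 2)⁻¹ := by positivity
      linarith
    · rw [Set.indicator_of_notMem (by exact h), norm_sub_rev, zero_add]
      push Not at h
      gcongr)
  refine this.trans ?_
  rw [integral_add b1.integrableOn c1, setIntegral_const, smul_eq_mul]
  have e1 := setIntegral_le_integral (s := vlH ρ L) b1 (Eventually.of_forall b0)
  rw [b2] at e1
  have e2 : volume.real (vlH ρ L) * (l ^ 2)⁻¹ ≤ π ^ 2 * l ^ 4 * (l ^ 2)⁻¹ := by gcongr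
  have e3 : π ^ 2 * l ^ 4 * (l ^ 2)⁻¹ = π ^ 2 * l ^ 2 := by field_simp
  linarith

theorem vl_main : ∃ C : ℝ, 0 ≤ C ∧ ∀ l ρ : ℝ, 0 < l → l ≤ 1 / 16 → 0 < ρ → ρ ≤ l ^ 3 → ∀ L : Finset ℂ, vlLat l L →
    ∫ z in Metric.ball (0:ℂ) 1 \ vlH ρ L, ‖vlS L z‖ ^ 2 ≤
      π ^ 3 / (2 * l ^ 4) + C / l ^ 2 * (1 + Real.log (4 * l / ρ)) := by
  obtain ⟨C, hC0, hC⟩ := vl_D2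
  refine ⟨C + 2 * π ^ 2 * (2 * π + π ^ 2) + π ^ 4 + π ^ 3, by positivity, fun l ρ hl hl' hρ hρl L hL => ?_⟩
  have hρl' : ρ ≤ l := hρl.trans (by nlinarith [mul_pos hl hl])
  have hD := hC l ρ hl hl' hρ hρl' L hL
  set c : ℝ := π / l ^ 2 with hc
  set t := Real.log (4 * l / ρ) with ht
  have ht0 : 0 ≤ t := Real.log_nonneg (by rw [le_div_iff₀ hρ]; linarith)
  set Ω := Metric.ball (0:ℂ) 1 \ vlH ρ L with hΩ
  have hΩm : MeasurableSet Ω := measurableSet_ball.diff (vlH_meas ρ L)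
  have hHs : vlH ρ L ⊆ Metric.ball (0:ℂ) 1 := Set.inter_subset_left
  have hp1 : ∀ p ∈ L, ‖p‖ < 1 := fun p hp => by
    have := ((hL p).1 hp).2.2
    have h2 := Real.sqrt_pos.2 (show (0:ℝ) < 2 by norm_num)
    nlinarith [mul_pos h2 hl]
  -- the deviation
  set D : ℂ → ℂ := fun z => vlS L z - (c:ℝ) * starRingEnd ℂ z with hDdef
  have hDm : Measurable D := (vlS_meas L).sub (by fun_prop)
  have hlin : ∫⁻ z in Ω, ENNReal.ofReal (‖D z‖ ^ 2) ≤ ENNReal.ofReal (C / l ^ 2 * (1 + t)) := by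
    refine le_trans (le_of_eq (lintegral_congr fun z => ?_)) hD
    rw [ENNReal.ofReal_pow (norm_nonneg _), ofReal_norm]
  have iD : IntegrableOn (fun z => ‖D z‖ ^ 2) Ω := by
    refine ⟨by fun_prop, ?_⟩
    rw [hasFiniteIntegral_iff_ofReal (Eventually.of_forall fun z => by positivity)]
    exact hlin.trans_lt ENNReal.ofReal_lt_top
  have eD : ∫ z in Ω, ‖D z‖ ^ 2 ≤ C / l ^ 2 * (1 + t) := by
    rw [integral_eq_lintegral_of_nonneg_ae (Eventually.of_forall fun z => by positivity) (by fun_prop)]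
    exact ENNReal.toReal_le_of_le_ofReal (by positivity) hlin
  -- cross term
  have hX : ∀ z, (z * vlS L z).re = ∑ p ∈ L, (z * (z - p)⁻¹).re := by
    intro z; rw [vlS, Finset.mul_sum, Complex.re_sum]
  have iXB : IntegrableOn (fun z => (z * vlS L z).re) (Metric.ball (0:ℂ) 1) := by
    simp only [hX]
    exact integrable_finsetSum _ fun p hp => (vl_cross p (hp1 p hp)).1
  have eXB : ∫ z in Metric.ball (0:ℂ) 1, (z * vlS L z).re = π * ∑ p ∈ L, (1 - ‖p‖ ^ 2) := by
    simp only [hX]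
    rw [integral_finsetSum _ fun p hp => (vl_cross p (hp1 p hp)).1, Finset.mul_sum]
    exact Finset.sum_congr rfl fun p hp => (vl_cross p (hp1 p hp)).2
  have iinv : ∀ p, IntegrableOn (fun z : ℂ => ‖z - p‖⁻¹) (vlH ρ L) := fun p => by
    have := (vl_inv_int p (T := vlH ρ L) (Metric.isBounded_ball.subset Set.inter_subset_left)).2
    simpa only [norm_sub_rev] using this
  have eXH : -(π * (2 * π + π ^ 2)) ≤ ∫ z in vlH ρ L, (z * vlS L z).re := by
    have h1 : ∫ z in vlH ρ L, -∑ p ∈ L, ‖z - p‖⁻¹ ≤ ∫ z in vlH ρ L, (z * vlS L z).re := by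
      refine setIntegral_mono_on (integrable_finsetSum _ fun p _ => iinv p).neg (iXB.mono_set hHs) (vlH_meas ρ L)
        fun z hz => ?_
      rw [hX, ← Finset.sum_neg_distrib]
      refine Finset.sum_le_sum fun p _ => ?_
      have hz1 : ‖z‖ < 1 := mem_ball_zero_iff.1 (hHs hz)
      have h3 := (abs_le.1 (Complex.abs_re_le_norm (z * (z - p)⁻¹))).1
      rw [norm_mul, norm_inv] at h3
      have : ‖z‖ * ‖z - p‖⁻¹ ≤ 1 * ‖z - p‖⁻¹ := by gcongr
      linarith
    refine le_trans ?_ h1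
    rw [integral_neg, integral_finsetSum _ fun p _ => iinv p, neg_le_neg_iff]
    refine (Finset.sum_le_sum fun p _ => (vl_hole hl hρ hρl hL p).1).trans ?_
    rw [Finset.sum_const, nsmul_eq_mul]
    calc (L.card : ℝ) * ((2 * π + π ^ 2) * l ^ 2) ≤ π / l ^ 2 * ((2 * π + π ^ 2) * l ^ 2) := by
          gcongr; exact vl_N hl hL
      _ = _ := by field_simp
  have eX : ∫ z in Ω, (z * vlS L z).re ≤ π * ((π / 2 + π * l ^ 2 / 2) / l ^ 2) + π * (2 * π + π ^ 2) := by
    rw [hΩ, setIntegral_sdiff (vlH_meas ρ L) iXB hHs, eXB]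
    have := mul_le_mul_of_nonneg_left (vl_sum hl hL) pi_pos.le
    linarith
  -- square term
  have eZ : π / 2 - π ^ 2 * l ^ 4 ≤ ∫ z in Ω, ‖z‖ ^ 2 := by
    rw [hΩ, setIntegral_sdiff (vlH_meas ρ L) vl_R5.1 hHs, vl_R5.2]
    have hne : volume (vlH ρ L) ≠ ⊤ := ne_top_of_le_ne_top (measure_ball_lt_top (x := (0:ℂ)) (r := 1)).ne
      (measure_mono hHs)
    have h1 := setIntegral_mono_on (vl_R5.1.mono_set hHs) (integrableOn_const (C := (1:ℝ)) hne) (vlH_meas ρ L)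
      (fun z hz => by
        have hz1 : ‖z‖ < 1 := mem_ball_zero_iff.1 (hHs hz)
        exact pow_le_one₀ (norm_nonneg _) hz1.le)
    rw [setIntegral_const, smul_eq_mul, mul_one] at h1
    have := (vl_hole hl hρ hρl hL 0).2
    linarith
  have hid : ∀ z, ‖vlS L z‖ ^ 2 = (‖D z‖ ^ 2 + 2 * c * (z * vlS L z).re) - c ^ 2 * ‖z‖ ^ 2 := by
    intro z
    simp only [hDdef, ← Complex.normSq_eq_norm_sq, Complex.normSq_apply, Complex.mul_re, Complex.mul_im,
      Complex.conj_re, Complex.conj_im, Complex.sub_re, Complex.sub_im, Complex.ofReal_re, Complex.ofReal_im]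
    ring
  have i2 : IntegrableOn (fun z => 2 * c * (z * vlS L z).re) Ω := (iXB.mono_set Set.sdiff_subset).const_mul _
  have i3 : IntegrableOn (fun z : ℂ => c ^ 2 * ‖z‖ ^ 2) Ω := (vl_R5.1.mono_set Set.sdiff_subset).const_mul _
  have i12 : IntegrableOn (fun z => ‖D z‖ ^ 2 + 2 * c * (z * vlS L z).re) Ω := iD.add i2
  simp only [hid]
  rw [integral_sub i12 i3, integral_add iD i2, integral_const_mul, integral_const_mul]
  have hc0 : 0 < c := by positivity
  have f1 := mul_le_mul_of_nonneg_left eX (show 0 ≤ 2 * c by positivity)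
  have f2 := mul_le_mul_of_nonneg_left eZ (show 0 ≤ c ^ 2 by positivity)
  have f3 : 2 * c * (π * ((π / 2 + π * l ^ 2 / 2) / l ^ 2) + π * (2 * π + π ^ 2)) =
      π ^ 3 / l ^ 4 + (π ^ 3 + 2 * π ^ 2 * (2 * π + π ^ 2)) / l ^ 2 := by
    rw [hc]; field_simp; ring
  have f4 : c ^ 2 * (π / 2 - π ^ 2 * l ^ 4) = π ^ 3 / (2 * l ^ 4) - π ^ 4 := by
    rw [hc]; field_simp
  have f5 : π ^ 4 ≤ π ^ 4 / l ^ 2 := by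
    rw [le_div_iff₀ (by positivity)]
    have : l ^ 2 ≤ 1 := by nlinarith
    nlinarith [pow_pos pi_pos 4]
  have f6 : π ^ 3 / l ^ 4 = 2 * (π ^ 3 / (2 * l ^ 4)) := by field_simp
  have f7 : (C + 2 * π ^ 2 * (2 * π + π ^ 2) + π ^ 4 + π ^ 3) / l ^ 2 * (1 + t) =
      C / l ^ 2 * (1 + t) + (π ^ 3 + 2 * π ^ 2 * (2 * π + π ^ 2)) / l ^ 2 + π ^ 4 / l ^ 2 +
       (2 * π ^ 2 * (2 * π + π ^ 2) + π ^ 4 + π ^ 3) / l ^ 2 * t := by ring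
  have f8 : 0 ≤ (2 * π ^ 2 * (2 * π + π ^ 2) + π ^ 4 + π ^ 3) / l ^ 2 * t := by positivity
  rw [f3] at f1
  rw [f4] at f2
  linarith


/-- The identification of the plane with `ℂ` as a linear isometry. -/
def vlT : Pt ≃ₗᵢ[ℝ] ℂ := Complex.orthonormalBasisOneI.repr.symm

theorem vlT_apply (x : Pt) : vlT x = toC x := Complex.orthonormalBasisOneI_repr_symm_apply x

theorem vlT_re (x : Pt) : (vlT x).re = x 0 := by simp [vlT_apply, toC]

theorem vlT_im (x : Pt) : (vlT x).im = x 1 := by simp [vlT_apply, toC]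

/-- real-linear map `v ↦ Im (s v)` -/
def vlLin (s : ℂ) : Pt →L[ℝ] ℂ :=
  Complex.ofRealCLM.comp (Complex.imCLM.comp (s • (vlT.toContinuousLinearEquiv : Pt →L[ℝ] ℂ)))

theorem vlLin_apply (s : ℂ) (v : Pt) : vlLin s v = ((s * vlT v).im : ℂ) := rfl

theorem vl_phase (u₀ : ℂ) (h : u₀ ≠ 0) :
    HasFDerivAt (fun u : ℂ => u / (‖u‖ : ℂ))
      ((u₀ / (‖u₀‖ : ℂ) * Complex.I) • (Complex.ofRealCLM.comp (Complex.imCLM.comp (u₀⁻¹ • (1 : ℂ →L[ℝ] ℂ))))) u₀ := by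
  have h1 : HasDerivAt (fun u : ℂ => Complex.log (u * u₀⁻¹)) (u₀⁻¹) u₀ := by
    have h0 : HasDerivAt (fun u : ℂ => u * u₀⁻¹) (u₀⁻¹) u₀ := by
      simpa using (hasDerivAt_id u₀).mul_const (u₀⁻¹)
    have := h0.clog (by rw [mul_inv_cancel₀ h]; simp)
    simpa [h] using this
  have h2 := h1.complexToReal_fderiv
  have h3 := Complex.ofRealCLM.hasFDerivAt.comp u₀ (Complex.imCLM.hasFDerivAt.comp u₀ h2)
  have h4 := ((h3.const_mul Complex.I).cexp).const_mul (u₀ / (‖u₀‖ : ℂ))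
  have h5 : (fun u : ℂ => u / (‖u‖ : ℂ)) =ᶠ[nhds u₀] (fun u : ℂ => (u₀ / (‖u₀‖ : ℂ)) * Complex.exp (Complex.I *
      (Complex.ofRealCLM ∘ Complex.imCLM ∘ fun u : ℂ => Complex.log (u * u₀⁻¹)) u)) := by
    filter_upwards [isOpen_ne.mem_nhds h] with u hu
    simp only [Function.comp, Complex.ofRealCLM_apply, Complex.imCLM_apply, Complex.log_im]
    have hn : u * u₀⁻¹ ≠ 0 := mul_ne_zero hu (inv_ne_zero h)
    have e := Complex.norm_mul_exp_arg_mul_I (u * u₀⁻¹)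
    rw [norm_mul, norm_inv] at e
    have a : (‖u‖ : ℂ) ≠ 0 := by simpa using hu
    have b : (‖u₀‖ : ℂ) ≠ 0 := by simpa using h
    rw [mul_comm Complex.I]
    push_cast at e
    have : Complex.exp (↑(u * u₀⁻¹).arg * Complex.I) = u * u₀⁻¹ * (‖u‖ : ℂ)⁻¹ * ‖u₀‖ := by
      generalize Complex.exp (↑(u * u₀⁻¹).arg * Complex.I) = E at e ⊢
      rw [← e]; field_simp
    rw [this]; field_simp
  refine (h4.congr_of_eventuallyEq h5).congr_fderiv ?_
  ext1
  simp [h]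
  ring

theorem vl_factor (p x : Pt) (h : x ≠ p) :
    HasFDerivAt (fun x : Pt => (toC x - toC p) / ((‖x - p‖ : ℝ) : ℂ))
      (((toC x - toC p) / ((‖x - p‖ : ℝ) : ℂ) * Complex.I) • vlLin (toC x - toC p)⁻¹) x := by
  have hn : ∀ y : Pt, ‖y - p‖ = ‖toC y - toC p‖ := by
    intro y; rw [← vlT_apply, ← vlT_apply, ← map_sub, LinearIsometryEquiv.norm_map]
  simp only [hn]
  have h0 : toC x - toC p ≠ 0 := by
    rw [← norm_pos_iff, ← hn, norm_pos_iff]; exact sub_ne_zero.2 h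
  have h1 : HasFDerivAt (fun y : Pt => toC y - toC p) (vlT.toContinuousLinearEquiv : Pt →L[ℝ] ℂ) x := by
    have := (vlT.toContinuousLinearEquiv : Pt →L[ℝ] ℂ).hasFDerivAt (x := x)
    have h2 := this.sub_const (toC p)
    refine h2.congr_of_eventuallyEq (Eventually.of_forall fun y => ?_)
    exact congrArg (fun w => w - toC p) (vlT_apply y).symm
  exact (vl_phase _ h0).comp x h1

theorem vl_prod (M : Finset Pt) (x : Pt) (h : x ∉ M) :
    HasFDerivAt (fun x : Pt => ∏ p ∈ M, (toC x - toC p) / ((‖x - p‖ : ℝ) : ℂ))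
      (((∏ p ∈ M, (toC x - toC p) / ((‖x - p‖ : ℝ) : ℂ)) * Complex.I) • vlLin (∑ p ∈ M, (toC x - toC p)⁻¹)) x := by
  classical
  induction M using Finset.induction_on with
  | empty =>
    simp only [Finset.prod_empty, Finset.sum_empty]
    refine (hasFDerivAt_const (1:ℂ) x).congr_fderiv ?_
    ext1 v; simp [vlLin_apply]
  | insert q M hq ih =>
    have h1 : x ≠ q := fun e => h (by simp [e])
    have h2 : x ∉ M := fun e => h (by simp [e])
    have h3 := (vl_factor q x h1).mul (ih h2)
    have e1 : (fun x : Pt => ∏ p ∈ insert q M, (toC x - toC p) / ((‖x - p‖ : ℝ) : ℂ)) =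
      (fun x : Pt => (toC x - toC q) / ((‖x - q‖ : ℝ) : ℂ)) * fun x : Pt => ∏ p ∈ M, (toC x - toC p) / ((‖x - p‖ : ℝ) : ℂ) := by
      funext y; rw [Finset.prod_insert hq]; rfl
    rw [e1]
    refine h3.congr_fderiv ?_
    ext1 v
    rw [Finset.prod_insert hq, Finset.sum_insert hq]
    simp only [add_apply, smul_apply, vlLin_apply, smul_eq_mul, add_mul,
      Complex.add_im, Complex.ofReal_add]
    ring

theorem vl_prod_norm (M : Finset Pt) (x : Pt) (h : x ∉ M) :
    ‖∏ p ∈ M, (toC x - toC p) / ((‖x - p‖ : ℝ) : ℂ)‖ = 1 := by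
  rw [norm_prod]
  refine Finset.prod_eq_one fun p hp => ?_
  have hx : x ≠ p := fun e => h (e ▸ hp)
  have h1 : ‖x - p‖ ≠ 0 := norm_ne_zero_iff.2 (sub_ne_zero.2 hx)
  rw [norm_div, ← vlT_apply, ← vlT_apply, ← map_sub, LinearIsometryEquiv.norm_map, Complex.norm_real, norm_norm, div_self h1]

theorem vl_latt_finite {l : ℝ} (hl : 0 < l) : (latt l).Finite := by
  set K : ℤ := ⌈1 / l⌉
  have key : ∀ (m : ℤ) (a : ℝ), a = m * l → |a| ≤ 1 → m ∈ Set.Icc (-K) K := by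
    intro m a ha h1
    rw [ha, abs_mul, abs_of_pos hl, ← le_div_iff₀ hl] at h1
    have h2 : |(m:ℝ)| ≤ K := h1.trans (Int.le_ceil _)
    have h3 := abs_le.1 h2
    constructor
    · exact_mod_cast h3.1
    · exact_mod_cast h3.2
  refine (((Set.finite_Icc (-K) K).prod (Set.finite_Icc (-K) K)).image
    (fun q : ℤ × ℤ => (!₂[(q.1:ℝ) * l, (q.2:ℝ) * l] : Pt))).subset ?_
  rintro p ⟨⟨m, hm⟩, ⟨n, hn⟩, hp⟩
  have h1 : ‖p‖ ≤ 1 := by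
    have h2 := Real.sqrt_pos.2 (show (0:ℝ) < 2 by norm_num)
    nlinarith [mul_pos h2 hl]
  refine ⟨(m, n), ⟨key m _ hm ((PiLp.norm_apply_le p 0).trans h1), key n _ hn ((PiLp.norm_apply_le p 1).trans h1)⟩, ?_⟩
  ext i
  fin_cases i
  · simp [hm]
  · simp [hn]

theorem vl_grad {l : ℝ} (hl : 0 < l) (x : Pt) (h : x ∉ latt l) :
    ‖pd1 (gfun l) x‖ ^ 2 + ‖pd2 (gfun l) x‖ ^ 2 = ‖∑ p ∈ (vl_latt_finite hl).toFinset, (toC x - toC p)⁻¹‖ ^ 2 := by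
  have e : gfun l = fun x : Pt => ∏ p ∈ (vl_latt_finite hl).toFinset, (toC x - toC p) / ((‖x - p‖ : ℝ) : ℂ) := by
    funext y
    exact finprod_mem_eq_finite_toFinset_prod _ _
  have hx : x ∉ (vl_latt_finite hl).toFinset := by simpa using h
  rw [pd1, pd2, e, (vl_prod _ x hx).fderiv]
  have hn := vl_prod_norm _ x hx
  have t0 : vlT (EuclideanSpace.single 0 1) = 1 := by simp [vlT_apply, toC]
  have t1 : vlT (EuclideanSpace.single 1 1) = Complex.I := by simp [vlT_apply, toC]
  simp only [smul_apply, vlLin_apply, smul_eq_mul, norm_mul, hn, t0, t1, Complex.norm_I,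
    one_mul, mul_one, Complex.norm_real, Complex.mul_I_im, Real.norm_eq_abs, sq_abs]
  rw [← Complex.normSq_eq_norm_sq, Complex.normSq_apply]
  ring

theorem vl_transfer {l ρ : ℝ} (hl : 0 < l) (hρ : 0 < ρ) : ∃ L : Finset ℂ, vlLat l L ∧
    ∫ x in lambdaSet l ρ, (‖pd1 (gfun l) x‖ ^ 2 + ‖pd2 (gfun l) x‖ ^ 2) =
      ∫ z in Metric.ball (0:ℂ) 1 \ vlH ρ L, ‖vlS L z‖ ^ 2 := by
  classical
  refine ⟨(vl_latt_finite hl).toFinset.image vlT, ?_, ?_⟩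
  · intro p
    simp only [Finset.mem_image, Set.Finite.mem_toFinset]
    constructor
    · rintro ⟨q, ⟨a, b, c⟩, rfl⟩
      rw [vlT_re, vlT_im, LinearIsometryEquiv.norm_map]
      exact ⟨a, b, c⟩
    · rintro ⟨a, b, c⟩
      refine ⟨vlT.symm p, ⟨?_, ?_, ?_⟩, by simp⟩
      · rw [← vlT_re]; simpa using a
      · rw [← vlT_im]; simpa using b
      · simpa using c
  · have hset : lambdaSet l ρ = vlT ⁻¹' (Metric.ball (0:ℂ) 1 \ vlH ρ ((vl_latt_finite hl).toFinset.image vlT)) := by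
      ext x
      have hd : dist (vlT x) 0 = dist x 0 := by simp [dist_zero_right]
      simp only [hd, lambdaSet, B1, vlH, Set.mem_sdiff, Set.mem_preimage, Set.mem_inter_iff, Set.mem_iUnion,
        Finset.mem_image, Set.Finite.mem_toFinset, exists_prop,
        Metric.mem_ball]
      constructor
      · rintro ⟨h1, h2⟩
        refine ⟨h1, ?_⟩
        rintro ⟨-, q, ⟨p, hp, rfl⟩, h3⟩
        exact h2 ⟨p, hp, by rwa [LinearIsometryEquiv.dist_map] at h3⟩
      · rintro ⟨h1, h2⟩
        refine ⟨h1, ?_⟩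
        rintro ⟨p, hp, h3⟩
        exact h2 ⟨h1, vlT p, ⟨p, hp, rfl⟩, by rwa [LinearIsometryEquiv.dist_map]⟩
    rw [← (vlT.measurePreserving).setIntegral_preimage_emb vlT.toHomeomorph.measurableEmbedding, ← hset]
    refine setIntegral_congr_fun ?_ fun x hx => ?_
    · exact measurableSet_ball.diff ((vl_latt_finite hl).measurableSet_biUnion fun p _ => measurableSet_ball)
    · have hx' : x ∉ latt l := by
        intro h
        exact hx.2 (Set.mem_biUnion h (Metric.mem_ball_self hρ))
      simp only [vl_grad hl x hx', vlS]
      rw [Finset.sum_image fun a _ b _ hab => vlT.injective hab]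
      simp only [vlT_apply]


theorem stmt14 (δ η : ℝ) (hδ : 0 < δ) (hη : 5 / 2 < η) :
    ∃ (C ε₀ : ℝ), 0 < ε₀ ∧ ∀ ε : ℝ, 0 < ε → ε < ε₀ →
      (∫ x in lambdaSet (δ * Real.sqrt ε) (ε ^ η),
        (‖pd1 (gfun (δ * Real.sqrt ε)) x‖ ^ 2 + ‖pd2 (gfun (δ * Real.sqrt ε)) x‖ ^ 2)) ≤
      π ^ 3 / (2 * δ ^ 4 * ε ^ 2) + C * |Real.log ε| / ε := by
  obtain ⟨C, hC0, hC⟩ := vl_main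
  refine ⟨C * (1 + η) / δ ^ 2, min (Real.exp (-1)) (min (1 / (256 * δ ^ 2)) (δ ^ 3)), by positivity, ?_⟩
  intro ε hε hε0
  obtain ⟨h1, h2⟩ := lt_min_iff.1 hε0
  obtain ⟨h2, h3⟩ := lt_min_iff.1 h2
  set l := δ * Real.sqrt ε with hl_def
  have hs : 0 < Real.sqrt ε := Real.sqrt_pos.2 hε
  have hs2 : Real.sqrt ε ^ 2 = ε := Real.sq_sqrt hε.le
  have hl : 0 < l := by positivity
  have hl2 : l ^ 2 = δ ^ 2 * ε := by rw [hl_def, mul_pow, hs2]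
  have hl4 : l ^ 4 = δ ^ 4 * ε ^ 2 := by
    calc l ^ 4 = (l ^ 2) ^ 2 := by ring
      _ = _ := by rw [hl2]; ring
  have hl16 : l ≤ 1 / 16 := by
    rw [lt_div_iff₀ (by positivity)] at h2
    nlinarith
  have hlog : Real.log ε < -1 := by rwa [Real.log_lt_iff_lt_exp hε]
  have hε1 : ε < 1 := h1.trans (by rw [Real.exp_lt_one_iff]; norm_num)
  have habs : |Real.log ε| = -Real.log ε := abs_of_neg (by linarith)
  have hρ : 0 < ε ^ η := Real.rpow_pos_of_pos hε _
  have hρl : ε ^ η ≤ l ^ 3 := by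
    have a1 : ε ^ η ≤ ε ^ (5 / 2 : ℝ) := Real.rpow_le_rpow_of_exponent_ge hε hε1.le hη.le
    have a2 : ε ^ (5 / 2 : ℝ) = ε * (ε * Real.sqrt ε) := by
      rw [Real.sqrt_eq_rpow, show (5 / 2 : ℝ) = 1 + (1 + 1 / 2) by norm_num, Real.rpow_add hε, Real.rpow_add hε,
        Real.rpow_one]
    have a3 : l ^ 3 = δ ^ 3 * (ε * Real.sqrt ε) := by
      rw [hl_def, mul_pow, pow_succ (Real.sqrt ε) 2, hs2]
    rw [a3]
    refine a1.trans (a2.le.trans ?_)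
    gcongr
  obtain ⟨L, hL, hint⟩ := vl_transfer hl hρ
  rw [hint]
  refine (hC l (ε ^ η) hl hl16 hρ hρl L hL).trans ?_
  rw [hl4, hl2, ← mul_assoc]
  have b1 : Real.log (4 * l / ε ^ η) ≤ η * |Real.log ε| := by
    rw [Real.log_div (by positivity) hρ.ne', Real.log_rpow hε, habs]
    have : Real.log (4 * l) ≤ 0 := Real.log_nonpos (by positivity) (by linarith)
    linarith
  have b2 : 1 + Real.log (4 * l / ε ^ η) ≤ (1 + η) * |Real.log ε| := by
    rw [habs] at *
    linarith
  have b3 : C / (δ ^ 2 * ε) * (1 + Real.log (4 * l / ε ^ η)) ≤ C / (δ ^ 2 * ε) * ((1 + η) * |Real.log ε|) := by gcongr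
  have b4 : C / (δ ^ 2 * ε) * ((1 + η) * |Real.log ε|) = C * (1 + η) / δ ^ 2 * |Real.log ε| / ε := by
    field_simp
  linarith
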